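/- arXiv:2004.01529 — 5 statements merged into one kernel-verified Lean document; each statement's English description precedes it below -/
import Mathlib

section
/- Let k ≥ 2 and r ≥ 1 be fixed integers and let n ≥ 3000·(r+1)³·(k+r)·k². If F ⊆ C([n],k) has |F| = Σ_{i=1}^{r} C(n−i, k−1) and satisfies I(F) = MI(F), then F is, up to a permutation of [n], equal to L_{n,k,1}^{(r)}. -/
open Finset

/-- The total intersection of a family: `I(F) = ∑_{A∈F} ∑_{B∈F} |A ∩ B|`. -/
def totalInt (F : Finset (Finset ℕ)) : ℕ :=
  ∑ A ∈ F, ∑ B ∈ F, (A ∩ B).card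

/-- The degree of a set `S` in the family `F`: the number of members of `F` containing `S`. -/
def degF (F : Finset (Finset ℕ)) (S : Finset ℕ) : ℕ :=
  (F.filter fun A => S ⊆ A).card

/-- `A` strictly precedes `B` in the lexicographic order on finite sets of positive integers:
the minimal element of the symmetric difference `A Δ B` belongs to `A`. -/
def lexLt (A B : Finset ℕ) : Prop :=
  ∃ m ∈ A \ B, ∀ x ∈ (A \ B) ∪ (B \ A), m ≤ x

/-- `S` is an initial segment (prefix) of the `k`-element subsets of `[n] = {1,…,n}`
under the lexicographic order. -/
def IsLexPrefix (n k : ℕ) (S : Finset (Finset ℕ)) : Prop :=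
  S ⊆ (Icc 1 n).powersetCard k ∧
    ∀ A ∈ S, ∀ B ∈ (Icc 1 n).powersetCard k, lexLt B A → B ∈ S

/-- The cardinality of the family `L_{n,k,t}^{(r)}`:
`C(n−t+1, k−t+1) − C(n−(t+r−1), k−t+1)`. -/
def lexStarCard (n k t r : ℕ) : ℕ :=
  (n - t + 1).choose (k - t + 1) - (n - (t + r - 1)).choose (k - t + 1)

/-- The full `t`-star with core `Y`: all `k`-subsets of `[n]` containing `Y`. -/
def fullStar (n k : ℕ) (Y : Finset ℕ) : Finset (Finset ℕ) :=
  ((Icc 1 n).powersetCard k).filter fun A => Y ⊆ A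

/-- The constant `C_s = 2^{2^{s−1}−1} · 10^{2^{s+2}−2} · (k² t⁴ (r+1)⁷)^{2^{s−1}}`. -/
def Cconst (k t r s : ℕ) : ℕ :=
  2 ^ (2 ^ (s - 1) - 1) * 10 ^ (2 ^ (s + 2) - 2) * (k ^ 2 * t ^ 4 * (r + 1) ^ 7) ^ (2 ^ (s - 1))

/-!
Counting pairs through their common elements, `I(F)` is the sum of the squared degrees of the
elements of `[n]`. Let `T` consist of `r` elements of largest degree in `F`, let `L` be the family
of all `k`-sets meeting `T`, which has the size of `F`, and put `P = F \ L` and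
`m = #P = #(L \ F)`. Let `g` separate the degrees on `T` from those outside `T`, and put
`D = C(n-1, k-1)` and `E = C(n-2, k-2)`. Passing from `F` to `L` gains at least `(D + g) m` on `T`:
every member of `L \ F` meets `T`, and every degree on `T` rises from at least `g` to `D`.
Outside `T` it loses at most `2 r k E m + ∑ deg_P(x)²`. In this sum the at most `4 k r` elements
with `2 k deg_P(x) ≥ D` contribute at most `g m + 16 k² r² E m`, as two elements have at most `E`
common members, and all the others at most `D m / 2`. Since `36 k² r² E < D`, the gain exceeds the
loss unless `m = 0`.
-/

section Family

variable {α : Type*} [DecidableEq α] {F G : Finset (Finset α)} {H T V X : Finset α}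
  {c D E g k r : ℕ}

/-- The degree of the element `x` in the set family `F`. -/
def familyDegree (F : Finset (Finset α)) (x : α) : ℕ := #{A ∈ F | x ∈ A}

/-- The codegree of the elements `x` and `y` in the set family `F`, i.e. the degree of the pair
`{x, y}` when `x ≠ y`. -/
def familyCodegree (F : Finset (Finset α)) (x y : α) : ℕ := #{A ∈ F | x ∈ A ∧ y ∈ A}

/-- The family of all `k`-subsets of `V` that meet `T`. For `V = [n]` and `T = [r]` this is the
lexicographic family `L_{n,k,1}^{(r)}`. -/
def hittingFamily (V : Finset α) (k : ℕ) (T : Finset α) : Finset (Finset α) :=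
  {A ∈ V.powersetCard k | ¬ Disjoint A T}

lemma familyDegree_mono (h : F ⊆ G) (x : α) : familyDegree F x ≤ familyDegree G x :=
  card_le_card (filter_subset_filter _ h)

lemma familyDegree_le_card (F : Finset (Finset α)) (x : α) : familyDegree F x ≤ #F :=
  card_filter_le _ _

lemma familyDegree_sdiff_add (F G : Finset (Finset α)) (x : α) :
    familyDegree (G \ F) x + familyDegree F x = familyDegree (F \ G) x + familyDegree G x := by
  have filter_sdiff (F G : Finset (Finset α)) :
      {A ∈ G \ F | x ∈ A} = {A ∈ G | x ∈ A} \ {A ∈ F | x ∈ A} := by grind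
  simp only [familyDegree, filter_sdiff, card_sdiff_add_card, union_comm]

lemma sum_familyDegree (F : Finset (Finset α)) (H : Finset α) :
    ∑ x ∈ H, familyDegree F x = ∑ A ∈ F, #(H ∩ A) := by
  simp only [← filter_mem_eq_inter]
  exact sum_card_bipartiteAbove_eq_sum_card_bipartiteBelow fun x A => x ∈ A

lemma sum_sq_familyDegree (hF : ∀ A ∈ F, A ⊆ V) :
    ∑ x ∈ V, familyDegree F x ^ 2 = ∑ A ∈ F, ∑ B ∈ F, #(A ∩ B) := by
  calc ∑ x ∈ V, familyDegree F x ^ 2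
      = ∑ x ∈ V, ∑ A ∈ F with x ∈ A, familyDegree F x := by
        simp only [sum_const, smul_eq_mul, sq, familyDegree]
    _ = ∑ A ∈ F, ∑ x ∈ A, familyDegree F x := sum_comm' fun x A => by grind
    _ = ∑ A ∈ F, ∑ B ∈ F, #(A ∩ B) := sum_congr rfl fun A _ => sum_familyDegree F A

lemma sum_familyDegree_le_mul_card (hF : ∀ A ∈ F, #A ≤ k) (H : Finset α) :
    ∑ x ∈ H, familyDegree F x ≤ k * #F := by
  rw [sum_familyDegree, mul_comm]
  exact sum_le_card_nsmul _ _ _ fun A hA => (card_le_card inter_subset_right).trans (hF A hA)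

lemma card_le_sum_familyDegree (hF : ∀ A ∈ F, ¬ Disjoint A T) :
    #F ≤ ∑ t ∈ T, familyDegree F t := by
  rw [sum_familyDegree, card_eq_sum_ones]
  refine sum_le_sum fun A hA => card_pos.2 ?_
  rw [← not_disjoint_iff_nonempty_inter, disjoint_comm]
  exact hF A hA

lemma sum_offDiag_familyCodegree (F : Finset (Finset α)) (H : Finset α) :
    ∑ q ∈ H.offDiag, familyCodegree F q.1 q.2 = ∑ A ∈ F, #(H ∩ A).offDiag := by
  have offDiag_inter (A : Finset α) :
      (H ∩ A).offDiag = {q ∈ H.offDiag | q.1 ∈ A ∧ q.2 ∈ A} := by grind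
  simp only [offDiag_inter]
  exact sum_card_bipartiteAbove_eq_sum_card_bipartiteBelow fun (q : α × α) A => q.1 ∈ A ∧ q.2 ∈ A

lemma sum_familyDegree_le (hE : Pairwise (familyCodegree F · · ≤ E)) (H : Finset α) :
    ∑ x ∈ H, familyDegree F x ≤ #F + #H ^ 2 * E := by
  have card_le (A : Finset α) : #(H ∩ A) ≤ 1 + #(H ∩ A).offDiag := by
    rw [offDiag_card]
    rcases Nat.lt_or_ge #(H ∩ A) 2 with h | h
    · omega
    · have := Nat.mul_le_mul_right #(H ∩ A) h
      omega
  calc ∑ x ∈ H, familyDegree F x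
      ≤ ∑ A ∈ F, (1 + #(H ∩ A).offDiag) :=
        (sum_familyDegree F H).trans_le (sum_le_sum fun A _ => card_le A)
    _ = #F + ∑ q ∈ H.offDiag, familyCodegree F q.1 q.2 := by
        rw [sum_add_distrib, ← card_eq_sum_ones, sum_offDiag_familyCodegree]
    _ ≤ #F + #H.offDiag * E := by
        gcongr
        exact sum_le_card_nsmul _ _ _ fun q hq => hE (mem_offDiag.1 hq).2.2
    _ ≤ #F + #H ^ 2 * E := by
        rw [offDiag_card, sq]
        gcongr
        omega

lemma familyDegree_le_card_mul (hE : Pairwise (familyCodegree F · · ≤ E))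
    (hF : ∀ A ∈ F, ¬ Disjoint A T) {x : α} (hx : x ∉ T) : familyDegree F x ≤ #T * E :=
  calc familyDegree F x ≤ ∑ t ∈ T, familyDegree {A ∈ F | x ∈ A} t :=
        card_le_sum_familyDegree fun A hA => hF A (mem_of_mem_filter A hA)
    _ = ∑ t ∈ T, familyCodegree F x t := by
        simp only [familyDegree, familyCodegree, filter_filter]
    _ ≤ #T * E := sum_le_card_nsmul _ _ _ fun t ht => hE (ne_of_mem_of_not_mem ht hx).symm

lemma mul_sum_sq_familyDegree_le (hF : ∀ A ∈ F, #A ≤ k)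
    (hX : ∀ x ∈ X, c * familyDegree F x ≤ D) :
    c * ∑ x ∈ X, familyDegree F x ^ 2 ≤ D * (k * #F) :=
  calc c * ∑ x ∈ X, familyDegree F x ^ 2
      = ∑ x ∈ X, c * familyDegree F x * familyDegree F x := by
        rw [mul_sum]
        exact sum_congr rfl fun x _ => by ring
    _ ≤ ∑ x ∈ X, D * familyDegree F x :=
        sum_le_sum fun x hx => Nat.mul_le_mul_right _ (hX x hx)
    _ ≤ D * (k * #F) := by
        rw [← mul_sum]
        gcongr
        exact sum_familyDegree_le_mul_card hF X

lemma sum_sq_familyDegree_le_of_codegree_le (hE : Pairwise (familyCodegree F · · ≤ E))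
    (hH : ∀ x ∈ H, familyDegree F x ≤ g) :
    ∑ x ∈ H, familyDegree F x ^ 2 ≤ (g + #H ^ 2 * E) * #F :=
  calc ∑ x ∈ H, familyDegree F x ^ 2
      ≤ ∑ x ∈ H, min g #F * familyDegree F x := by
        refine sum_le_sum fun x hx => ?_
        rw [sq]
        exact Nat.mul_le_mul_right _ (le_min (hH x hx) (familyDegree_le_card F x))
    _ ≤ min g #F * (#F + #H ^ 2 * E) := by
        rw [← mul_sum]
        gcongr
        exact sum_familyDegree_le hE H
    _ ≤ g * #F + #F * (#H ^ 2 * E) := by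
        rw [mul_add]
        gcongr
        · exact min_le_left _ _
        · exact min_le_right _ _
    _ = (g + #H ^ 2 * E) * #F := by ring

lemma card_lt_of_le_familyDegree (hk : 0 < k) (hr : 0 < r)
    (hE : Pairwise (familyCodegree F · · ≤ E)) (hF : #F ≤ r * D) (hDE : 16 * k ^ 2 * r * E < D)
    (hH : ∀ x ∈ H, D ≤ 2 * k * familyDegree F x) : #H < 4 * k * r := by
  by_contra! hcard
  obtain ⟨K, hKH, hK⟩ := exists_subset_card_eq hcard
  have hlower : #K * D ≤ 2 * k * ∑ x ∈ K, familyDegree F x := by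
    rw [mul_sum]
    exact card_nsmul_le_sum _ _ _ fun x hx => hH x (hKH hx)
  have hupper : ∑ x ∈ K, familyDegree F x ≤ r * D + r * (16 * k ^ 2 * r * E) :=
    calc ∑ x ∈ K, familyDegree F x ≤ #F + #K ^ 2 * E := sum_familyDegree_le hE K
      _ ≤ r * D + #K ^ 2 * E := by gcongr
      _ = r * D + r * (16 * k ^ 2 * r * E) := by rw [hK]; ring
  have hlt : 2 * k * ∑ x ∈ K, familyDegree F x < #K * D :=
    calc 2 * k * ∑ x ∈ K, familyDegree F x
        ≤ 2 * k * (r * D + r * (16 * k ^ 2 * r * E)) := by gcongr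
      _ < 2 * k * (r * D + r * D) := by gcongr
      _ = #K * D := by rw [hK]; ring
  exact hlt.not_ge hlower

lemma two_mul_sum_sq_familyDegree_le (hk : 0 < k) (hr : 0 < r)
    (hE : Pairwise (familyCodegree F · · ≤ E)) (hF : #F ≤ r * D) (hDE : 16 * k ^ 2 * r * E < D)
    (hFk : ∀ A ∈ F, #A ≤ k) (hX : ∀ x ∈ X, familyDegree F x ≤ g) :
    2 * ∑ x ∈ X, familyDegree F x ^ 2 ≤ (2 * g + 32 * k ^ 2 * r ^ 2 * E + D) * #F := by
  rw [← sum_filter_add_sum_filter_not X (fun x => D ≤ 2 * k * familyDegree F x)]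
  set H := {x ∈ X | D ≤ 2 * k * familyDegree F x}
  have hH : #H ≤ 4 * k * r :=
    (card_lt_of_le_familyDegree hk hr hE hF hDE fun x hx => (mem_filter.1 hx).2).le
  have heavy : ∑ x ∈ H, familyDegree F x ^ 2 ≤ (g + 16 * k ^ 2 * r ^ 2 * E) * #F :=
    calc ∑ x ∈ H, familyDegree F x ^ 2
        ≤ (g + #H ^ 2 * E) * #F :=
          sum_sq_familyDegree_le_of_codegree_le hE fun x hx => hX x (mem_of_mem_filter x hx)
      _ ≤ (g + (4 * k * r) ^ 2 * E) * #F := by gcongr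
      _ = (g + 16 * k ^ 2 * r ^ 2 * E) * #F := by ring
  have light : 2 * ∑ x ∈ X with ¬ D ≤ 2 * k * familyDegree F x, familyDegree F x ^ 2 ≤ D * #F := by
    refine Nat.le_of_mul_le_mul_left ?_ hk
    have := mul_sum_sq_familyDegree_le (X := {x ∈ X | ¬ D ≤ 2 * k * familyDegree F x}) hFk
      fun x hx => (not_le.1 (mem_filter.1 hx).2).le
    linarith
  linarith

lemma sum_sq_familyDegree_add_le (hT : ∀ A ∈ F \ G, Disjoint A T)
    (hF : ∀ t ∈ T, g ≤ familyDegree F t) (hG : ∀ t ∈ T, D ≤ familyDegree G t) :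
    ∑ t ∈ T, familyDegree F t ^ 2 + (D + g) * ∑ t ∈ T, familyDegree (G \ F) t ≤
      ∑ t ∈ T, familyDegree G t ^ 2 := by
  rw [mul_sum, ← sum_add_distrib]
  refine sum_le_sum fun t ht => ?_
  have hzero : familyDegree (F \ G) t = 0 :=
    card_eq_zero.2 <| filter_eq_empty_iff.2 fun A hA htA => disjoint_left.1 (hT A hA) htA ht
  have hsum : familyDegree (G \ F) t + familyDegree F t = familyDegree G t := by
    rw [familyDegree_sdiff_add, hzero, zero_add]
  calc familyDegree F t ^ 2 + (D + g) * familyDegree (G \ F) t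
      ≤ familyDegree F t ^ 2 + (familyDegree G t + familyDegree F t) * familyDegree (G \ F) t := by
        gcongr
        · exact hG t ht
        · exact hF t ht
    _ = familyDegree G t ^ 2 := by rw [← hsum]; ring

lemma sum_sq_familyDegree_le_add (hF : ∀ A ∈ F, #A ≤ k) (hG : ∀ x ∈ X, familyDegree G x ≤ c) :
    ∑ x ∈ X, familyDegree F x ^ 2 ≤ ∑ x ∈ X, familyDegree G x ^ 2
      + 2 * c * (k * #(F \ G)) + ∑ x ∈ X, familyDegree (F \ G) x ^ 2 :=
  calc ∑ x ∈ X, familyDegree F x ^ 2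
      ≤ ∑ x ∈ X, (familyDegree G x ^ 2 + 2 * c * familyDegree (F \ G) x
          + familyDegree (F \ G) x ^ 2) := by
        refine sum_le_sum fun x hx => ?_
        calc familyDegree F x ^ 2
            ≤ (familyDegree G x + familyDegree (F \ G) x) ^ 2 := by
              gcongr
              have := familyDegree_sdiff_add F G x
              omega
          _ = familyDegree G x ^ 2 + 2 * familyDegree G x * familyDegree (F \ G) x
                + familyDegree (F \ G) x ^ 2 := by ring
          _ ≤ _ := by
              gcongr
              exact hG x hx
    _ = ∑ x ∈ X, familyDegree G x ^ 2 + 2 * c * ∑ x ∈ X, familyDegree (F \ G) x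
          + ∑ x ∈ X, familyDegree (F \ G) x ^ 2 := by
        rw [sum_add_distrib, sum_add_distrib, mul_sum]
    _ ≤ _ := by
        gcongr
        exact sum_familyDegree_le_mul_card (fun A hA => hF A (sdiff_subset hA)) X

lemma pairwise_familyCodegree_le (hF : F ⊆ V.powersetCard k) :
    Pairwise (familyCodegree F · · ≤ (#V - 2).choose (k - 2)) := by
  intro x y hxy
  by_cases hpair : ∃ A ∈ F, x ∈ A ∧ y ∈ A
  · obtain ⟨A, hA, hxyA⟩ := hpair
    obtain ⟨hAV, hAk⟩ := mem_powersetCard.1 (hF hA)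
    have hsub : ({x, y} : Finset α) ⊆ A := by simpa [insert_subset_iff] using hxyA
    have hcount := card_filter_powersetCard_subset {x, y} V k (hsub.trans hAV)
      (hAk ▸ card_le_card hsub)
    rw [card_pair hxy] at hcount
    simp only [← hcount, familyCodegree, insert_subset_iff, singleton_subset_iff]
    exact card_le_card (filter_subset_filter _ hF)
  · have : familyCodegree F x y = 0 := by
      simpa [familyCodegree, filter_eq_empty_iff] using hpair
    omega

lemma hittingFamily_subset (V : Finset α) (k : ℕ) (T : Finset α) :
    hittingFamily V k T ⊆ V.powersetCard k :=
  filter_subset _ _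

lemma not_disjoint_of_mem_hittingFamily {A : Finset α} (hA : A ∈ hittingFamily V k T) :
    ¬ Disjoint A T :=
  (mem_filter.1 hA).2

lemma card_hittingFamily (hT : T ⊆ V) :
    #(hittingFamily V k T) = (#V).choose k - (#V - #T).choose k := by
  have hdisj : {A ∈ V.powersetCard k | Disjoint A T} = (V \ T).powersetCard k := by
    ext A
    simp only [mem_filter, mem_powersetCard, subset_sdiff]
    tauto
  rw [hittingFamily, filter_not, card_sdiff_of_subset (filter_subset _ _), hdisj,
    card_powersetCard, card_powersetCard, card_sdiff_of_subset hT]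

lemma familyDegree_hittingFamily (hk : 1 ≤ k) {t : α} (htT : t ∈ T) (htV : t ∈ V) :
    familyDegree (hittingFamily V k T) t = (#V - 1).choose (k - 1) := by
  rw [← card_singleton t, ← card_filter_powersetCard_subset {t} V k (by simpa) (by simpa)]
  simp only [familyDegree, hittingFamily, filter_filter, singleton_subset_iff]
  congr 1
  exact filter_congr fun A _ => and_iff_right_of_imp fun htA => not_disjoint_iff.2 ⟨t, htA, htT⟩

lemma card_hittingFamily_le (hk : 1 ≤ k) (hT : T ⊆ V) :
    #(hittingFamily V k T) ≤ #T * (#V - 1).choose (k - 1) :=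
  (card_le_sum_familyDegree fun _ => not_disjoint_of_mem_hittingFamily).trans <|
    sum_le_card_nsmul _ _ _ fun _ ht => (familyDegree_hittingFamily hk ht (hT ht)).le

lemma image_hittingFamily {β : Type*} [DecidableEq β] {f : α → β} (hf : Function.Injective f)
    (V : Finset α) (k : ℕ) (T : Finset α) :
    (hittingFamily V k T).image (image f) = hittingFamily (V.image f) k (T.image f) := by
  have himage (s : Finset α) : s.image f = s.map ⟨f, hf⟩ := (map_eq_image ⟨f, hf⟩ s).symm
  rw [hittingFamily, hittingFamily, himage, himage, powersetCard_map, filter_map, map_eq_image]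
  simp only [Function.comp_def, RelEmbedding.coe_toEmbedding, mapEmbedding_apply, disjoint_map]
  exact image_congr fun A _ => himage A

lemma mul_choose_lt_choose (hk : 2 ≤ k) (hc : 2 ≤ c) {n : ℕ} (hn : c * k ≤ n) :
    c * (n - 2).choose (k - 2) < (n - 1).choose (k - 1) := by
  obtain ⟨j, rfl⟩ := Nat.exists_eq_add_of_le' hk
  have hjn : 2 * (j + 2) ≤ n := (Nat.mul_le_mul_right _ hc).trans hn
  obtain ⟨m, rfl⟩ := Nat.exists_eq_add_of_le' (show 2 ≤ n by omega)
  refine Nat.lt_of_mul_lt_mul_left (a := j + 1) ?_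
  calc (j + 1) * (c * m.choose j) = c * (j + 1) * m.choose j := by ring
    _ < (m + 1) * m.choose j := by
      have : 0 < m.choose j := Nat.choose_pos (by omega)
      gcongr
      linarith
    _ = (j + 1) * (m + 1).choose (j + 1) := by rw [Nat.add_one_mul_choose_eq, mul_comm]

lemma mul_card_sdiff_hittingFamily_le (hk : 1 ≤ k) (hF : F ⊆ V.powersetCard k) (hT : T ⊆ V)
    (hgT : ∀ t ∈ T, g ≤ familyDegree F t) (hcard : #F = #(hittingFamily V k T))
    (hle : ∑ x ∈ V, familyDegree (hittingFamily V k T) x ^ 2 ≤ ∑ x ∈ V, familyDegree F x ^ 2) :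
    ((#V - 1).choose (k - 1) + g) * #(F \ hittingFamily V k T) ≤
      2 * (#T * (#V - 2).choose (k - 2)) * (k * #(F \ hittingFamily V k T))
        + ∑ x ∈ V \ T, familyDegree (F \ hittingFamily V k T) x ^ 2 := by
  set L := hittingFamily V k T
  have hdisj : ∀ A ∈ F \ L, Disjoint A T := fun A hA => by
    obtain ⟨hAF, hAL⟩ := mem_sdiff.1 hA
    by_contra hAT
    exact hAL (mem_filter.2 ⟨hF hAF, hAT⟩)
  have hinner := sum_sq_familyDegree_add_le hdisj hgT fun t ht =>
    (familyDegree_hittingFamily hk ht (hT ht)).ge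
  have houter := sum_sq_familyDegree_le_add (X := V \ T)
    (fun A hA => (mem_powersetCard.1 (hF hA)).2.le) fun x hx =>
      familyDegree_le_card_mul (pairwise_familyCodegree_le (hittingFamily_subset V k T))
        (fun _ => not_disjoint_of_mem_hittingFamily) (mem_sdiff.1 hx).2
  have hgain : #(F \ L) ≤ ∑ t ∈ T, familyDegree (L \ F) t := by
    rw [card_sdiff_comm hcard]
    exact card_le_sum_familyDegree fun A hA =>
      not_disjoint_of_mem_hittingFamily (sdiff_subset hA)
  have hmul := Nat.mul_le_mul_left ((#V - 1).choose (k - 1) + g) hgain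
  rw [← sum_sdiff hT, ← sum_sdiff hT] at hle
  linarith

theorem eq_hittingFamily_of_sum_sq_familyDegree_le (hk : 2 ≤ k) (hV : 36 * k ^ 3 * #T ^ 2 ≤ #V)
    (hF : F ⊆ V.powersetCard k) (hT : T ⊆ V) (hgT : ∀ t ∈ T, g ≤ familyDegree F t)
    (hgV : ∀ x ∈ V \ T, familyDegree F x ≤ g) (hcard : #F = #(hittingFamily V k T))
    (hle : ∑ x ∈ V, familyDegree (hittingFamily V k T) x ^ 2 ≤ ∑ x ∈ V, familyDegree F x ^ 2) :
    F = hittingFamily V k T := by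
  set L := hittingFamily V k T
  set D := (#V - 1).choose (k - 1)
  set E := (#V - 2).choose (k - 2)
  by_contra hne
  have hP : 0 < #(F \ L) :=
    card_pos.2 <| sdiff_nonempty.2 fun h => hne (eq_of_subset_of_card_le h hcard.ge)
  have hPF : F \ L ⊆ F := sdiff_subset
  have hFD : #F ≤ #T * D := hcard.trans_le (card_hittingFamily_le (by omega) hT)
  have hTpos : 0 < #T := Nat.pos_of_mul_pos_right (hP.trans_le ((card_le_card hPF).trans hFD))
  have hDE : 36 * k ^ 2 * #T ^ 2 * E < D := by
    have hpos : 0 < k ^ 2 * #T ^ 2 := by positivity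
    exact mul_choose_lt_choose hk (by linarith) (by linarith)
  have hout := two_mul_sum_sq_familyDegree_le (X := V \ T) (by omega) hTpos
    (pairwise_familyCodegree_le (hPF.trans hF)) ((card_le_card hPF).trans hFD)
    (hDE.trans_le' (by gcongr; exacts [by norm_num, Nat.le_self_pow two_ne_zero _]))
    (fun A hA => (mem_powersetCard.1 (hF (hPF hA))).2.le)
    fun x hx => (familyDegree_mono hPF x).trans (hgV x hx)
  have hmain := mul_card_sdiff_hittingFamily_le (by omega) hF hT hgT hcard hle
  have hkT : k * #T ≤ k ^ 2 * #T ^ 2 := by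
    rw [← mul_pow]
    exact Nat.le_self_pow two_ne_zero _
  have hcontra : D * #(F \ L) ≤ 36 * k ^ 2 * #T ^ 2 * E * #(F \ L) := by
    have := Nat.mul_le_mul_right (E * #(F \ L)) hkT
    linarith
  exact (Nat.le_of_mul_le_mul_right hcontra hP).not_gt hDE

lemma exists_subset_card_eq_forall_le {β : Type*} [LinearOrder β] [OrderBot β] (f : α → β)
    (hr : r ≤ #V) :
    ∃ T ⊆ V, #T = r ∧ ∃ b, (∀ t ∈ T, b ≤ f t) ∧ ∀ x ∈ V \ T, f x ≤ b := by
  induction r with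
  | zero => exact ⟨∅, empty_subset V, rfl, V.sup f, by simp, fun x hx => le_sup (sdiff_subset hx)⟩
  | succ r ih =>
    obtain ⟨T, hTV, hTr, b, hbT, hb⟩ := ih (by omega)
    have hne : (V \ T).Nonempty := by
      rw [← card_pos, card_sdiff_of_subset hTV]
      omega
    obtain ⟨y, hy, hmax⟩ := exists_max_image _ f hne
    obtain ⟨hyV, hyT⟩ := mem_sdiff.1 hy
    refine ⟨insert y T, insert_subset hyV hTV, by rw [card_insert_of_notMem hyT, hTr], f y, ?_, ?_⟩
    · exact forall_mem_insert _ _ _ |>.2 ⟨le_rfl, fun t ht => (hb y hy).trans (hbT t ht)⟩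
    · exact fun x hx => hmax x (sdiff_subset_sdiff Subset.rfl (subset_insert y T) hx)

theorem exists_eq_hittingFamily_of_sum_sq_familyDegree_max (hk : 2 ≤ k)
    (hV : 36 * k ^ 3 * r ^ 2 ≤ #V) (hF : F ⊆ V.powersetCard k)
    (hcard : #F = (#V).choose k - (#V - r).choose k)
    (hmax : ∀ G ⊆ V.powersetCard k, #G = #F →
      ∑ x ∈ V, familyDegree G x ^ 2 ≤ ∑ x ∈ V, familyDegree F x ^ 2) :
    ∃ T ⊆ V, #T = r ∧ F = hittingFamily V k T := by
  have hrV : r ≤ #V := (Nat.le_self_pow two_ne_zero r).trans <|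
    (Nat.le_mul_of_pos_left _ (by positivity)).trans hV
  obtain ⟨T, hTV, rfl, g, hgT, hgV⟩ := exists_subset_card_eq_forall_le (familyDegree F) hrV
  have hcard' : #F = #(hittingFamily V k T) := hcard.trans (card_hittingFamily hTV).symm
  exact ⟨T, hTV, rfl, eq_hittingFamily_of_sum_sq_familyDegree_le hk hV hF hTV hgT hgV hcard'
    (hmax _ (hittingFamily_subset V k T) hcard'.symm)⟩

lemma exists_perm_image_eq {U : Finset α} (hT : T ⊆ V) (hU : U ⊆ V) (hcard : #T = #U) :
    ∃ σ : Equiv.Perm α, V.image σ = V ∧ T.image σ = U := by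
  obtain ⟨τ, hτ⟩ := Equiv.Perm.exists_map_finset_eq
    (T.subtype (· ∈ V)) (U.subtype (· ∈ V)) (by
      rw [card_subtype, card_subtype, filter_true_of_mem hT, filter_true_of_mem hU, hcard])
  have hσV : ∀ x ∈ V, Equiv.Perm.ofSubtype τ x ∈ V := fun x hx => by
    rw [Equiv.Perm.ofSubtype_apply_of_mem τ hx]
    exact (τ ⟨x, hx⟩).2
  have hσT : ∀ x ∈ T, Equiv.Perm.ofSubtype τ x ∈ U := fun x hx => by
    rw [Equiv.Perm.ofSubtype_apply_of_mem τ (hT hx)]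
    have : τ ⟨x, hT hx⟩ ∈ U.subtype (· ∈ V) :=
      hτ ▸ mem_map_of_mem τ.toEmbedding (mem_subtype.2 hx)
    exact mem_subtype.1 this
  refine ⟨Equiv.Perm.ofSubtype τ, eq_of_subset_of_card_le (image_subset_iff.2 hσV) ?_,
    eq_of_subset_of_card_le (image_subset_iff.2 hσT) ?_⟩
  · rw [card_image_of_injective _ (Equiv.injective _)]
  · rw [card_image_of_injective _ (Equiv.injective _), hcard]

end Family

lemma totalInt_eq_sum_sq_familyDegree {n k : ℕ} {F : Finset (Finset ℕ)}
    (hF : F ⊆ (Icc 1 n).powersetCard k) : totalInt F = ∑ x ∈ Icc 1 n, familyDegree F x ^ 2 :=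
  (sum_sq_familyDegree fun _ hA => (mem_powersetCard.1 (hF hA)).1).symm

lemma isLexPrefix_hittingFamily (n k r : ℕ) :
    IsLexPrefix n k (hittingFamily (Icc 1 n) k (Icc 1 r)) := by
  refine ⟨hittingFamily_subset _ _ _, fun A hA B hB ⟨m, hm, hmin⟩ => mem_filter.2 ⟨hB, ?_⟩⟩
  obtain ⟨a, haA, har⟩ := not_disjoint_iff.1 (not_disjoint_of_mem_hittingFamily hA)
  by_cases haB : a ∈ B
  · exact not_disjoint_iff.2 ⟨a, haB, har⟩
  · have hmB : m ∈ B := (mem_sdiff.1 hm).1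
    have hm1 : 1 ≤ m := (mem_Icc.1 ((mem_powersetCard.1 hB).1 hmB)).1
    have hma : m ≤ a := hmin a (mem_union_right _ (mem_sdiff.2 ⟨haA, haB⟩))
    exact not_disjoint_iff.2 ⟨m, hmB, mem_Icc.2 ⟨hm1, hma.trans (mem_Icc.1 har).2⟩⟩

lemma sum_Icc_choose_sub {n k r : ℕ} (hk : 1 ≤ k) (hr : r ≤ n) :
    ∑ i ∈ Icc 1 r, (n - i).choose (k - 1) = n.choose k - (n - r).choose k := by
  refine Nat.eq_sub_of_add_eq ?_
  obtain ⟨j, rfl⟩ := Nat.exists_eq_add_of_le' hk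
  induction r with
  | zero => simp
  | succ r ih =>
    have hsub : n - r = n - (r + 1) + 1 := by omega
    rw [sum_Icc_succ_top (by omega), ← ih (by omega), hsub, Nat.choose_succ_succ', add_assoc]
    rfl

theorem stmt3_general (k r n : ℕ) (hk : 2 ≤ k) (hr : 1 ≤ r) (hn : 36 * k ^ 3 * r ^ 2 ≤ n)
    (F : Finset (Finset ℕ)) (hF : F ⊆ (Icc 1 n).powersetCard k)
    (hcard : F.card = ∑ i ∈ Icc 1 r, (n - i).choose (k - 1))
    (hopt : ∀ G ⊆ (Icc 1 n).powersetCard k, G.card = F.card → totalInt G ≤ totalInt F) :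
    ∃ σ : Equiv.Perm ℕ, (∀ x ∈ Icc 1 n, σ x ∈ Icc 1 n) ∧
      ∃ L : Finset (Finset ℕ), IsLexPrefix n k L ∧ L.card = lexStarCard n k 1 r ∧
        (F.image fun A => A.image fun x => σ x) = L := by
  have hrn : r ≤ n := (Nat.le_self_pow two_ne_zero r).trans <|
    (Nat.le_mul_of_pos_left _ (by positivity)).trans hn
  have hrV : Icc 1 r ⊆ Icc 1 n := Icc_subset_Icc_right hrn
  have hn_card : #(Icc 1 n) = n := by simp
  rw [sum_Icc_choose_sub (by omega) hrn] at hcard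
  obtain ⟨T, hT, hTr, rfl⟩ := exists_eq_hittingFamily_of_sum_sq_familyDegree_max hk
    (hn_card.symm ▸ hn) hF (hn_card.symm ▸ hcard)
    fun G hG hGF => by
      simpa only [totalInt_eq_sum_sq_familyDegree hG, totalInt_eq_sum_sq_familyDegree hF]
        using hopt G hG hGF
  obtain ⟨σ, hσV, hσT⟩ := exists_perm_image_eq hT hrV (by simpa using hTr)
  refine ⟨σ, fun x hx => hσV ▸ mem_image_of_mem σ hx, hittingFamily (Icc 1 n) k (Icc 1 r),
    isLexPrefix_hittingFamily n k r, ?_, ?_⟩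
  · simp [card_hittingFamily hrV, lexStarCard, Nat.sub_add_cancel (hr.trans hrn),
      Nat.sub_add_cancel (one_le_two.trans hk)]
  · exact (image_hittingFamily σ.injective _ _ _).trans (by rw [hσV, hσT])

/-- **Corollary.** If `F` has size `∑_{i=1}^{r} C(n−i,k−1)` and maximizes the total
intersection among all families of the same size, then up to a permutation of `[n]`,
`F = L_{n,k,1}^{(r)}`. -/
theorem stmt3 (k r n : ℕ) (hk : 2 ≤ k) (hr : 1 ≤ r)
    (hn : 3000 * (r + 1) ^ 3 * (k + r) * k ^ 2 ≤ n)
    (F : Finset (Finset ℕ)) (hF : F ⊆ (Icc 1 n).powersetCard k)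
    (hcard : F.card = ∑ i ∈ Icc 1 r, (n - i).choose (k - 1))
    (hopt : ∀ G ⊆ (Icc 1 n).powersetCard k, G.card = F.card → totalInt G ≤ totalInt F) :
    ∃ σ : Equiv.Perm ℕ, (∀ x ∈ Icc 1 n, σ x ∈ Icc 1 n) ∧
      ∃ L : Finset (Finset ℕ), IsLexPrefix n k L ∧ L.card = lexStarCard n k 1 r ∧
        (F.image fun A => A.image fun x => σ x) = L := by
  refine stmt3_general k r n hk hr (hn.trans' ?_) F hF hcard hopt
  calc 36 * k ^ 3 * r ^ 2 = 36 * r ^ 2 * k * k ^ 2 := by ring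
    _ ≤ 3000 * (r + 1) ^ 3 * (k + r) * k ^ 2 := by gcongr <;> omega
end

section
/- Let k ≥ 2 and r ≥ 0 be fixed integers and let n ≥ 3000·(r+1)³·(k+r)·k². Let δ ∈ [150k³/n, 1] be such that M := Σ_{i=1}^{r} C(n−i, k−1) + δ·C(n−(r+1), k−1) is an integer. If F ⊆ C([n],k) has |F| = M and satisfies I(F) ≥ ((r + δ²)/(r + δ)²)·|F|², then there exists an element x ∈ [n] with deg_F(x) ≥ |F|/(4(r+1)). -/
open Finset

/-! The total intersection of `F` is the sum of the squared degrees. Call an element heavy if its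
degree is at least `|F| / t`, where `t = 2k(r+1)`. As the degrees sum to `k|F|`, the light elements
contribute at most `k|F|² / t = |F|² / (2(r+1))` to the sum of squares. Pairs of elements have small
codegree, so a second moment estimate bounds the degree sum over the heavy elements by `2|F|`,
and these contribute at most `2|F|Δ`, where `Δ` is the largest degree. As the hypothesis on
`I(F)` gives `I(F) ≥ |F|² / (r+1)`, it follows that `Δ ≥ |F| / (4(r+1))`. -/

lemma add_two_mul_choose_le (a b : ℕ) :
    (a + 2) * a.choose b ≤ (b + 2) * (a + 1).choose (b + 1) := by
  have hmono : a.choose b ≤ (a + 1).choose (b + 1) :=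
    Nat.choose_succ_succ a b ▸ Nat.le_add_right _ _
  linarith [Nat.add_one_mul_choose_eq a b]

section Hypergraph

variable {α : Type*} [DecidableEq α] {F : Finset (Finset α)} {V X : Finset α} {k D : ℕ}

/-- The degree of a vertex in a set family over an arbitrary ground type; over `ℕ` it is the value
of `degF` at a singleton. -/
def vertexDegree (F : Finset (Finset α)) (x : α) : ℕ := #{A ∈ F | x ∈ A}

/-- The codegree of two vertices in a set family, that is, the number of members containing both of
them; for `x = y` it is the degree. -/
def codegree (F : Finset (Finset α)) (x y : α) : ℕ := #{A ∈ F | x ∈ A ∧ y ∈ A}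

lemma sum_card_inter_eq_sum_vertexDegree (F : Finset (Finset α)) (X : Finset α) :
    ∑ A ∈ F, #(X ∩ A) = ∑ x ∈ X, vertexDegree F x := by
  simp_rw [← filter_mem_eq_inter]
  exact (sum_card_bipartiteAbove_eq_sum_card_bipartiteBelow (fun x A => x ∈ A)).symm

lemma sum_sum_card_inter_eq_sum_vertexDegree_sq (hV : ∀ A ∈ F, A ⊆ V) :
    ∑ A ∈ F, ∑ B ∈ F, #(A ∩ B) = ∑ x ∈ V, vertexDegree F x ^ 2 := by
  calc ∑ A ∈ F, ∑ B ∈ F, #(A ∩ B)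
      = ∑ A ∈ F, ∑ x ∈ A, vertexDegree F x :=
        sum_congr rfl fun A _ => sum_card_inter_eq_sum_vertexDegree F A
    _ = ∑ x ∈ V, ∑ A ∈ F with x ∈ A, vertexDegree F x :=
        sum_comm' fun A x => by
          simp only [mem_filter]
          exact ⟨fun h => ⟨h, hV A h.1 h.2⟩, fun h => h.1⟩
    _ = ∑ x ∈ V, vertexDegree F x ^ 2 := by
        simp only [sum_const, smul_eq_mul, sq, vertexDegree]

lemma sum_vertexDegree_le (hF : ∀ A ∈ F, #A ≤ k) (X : Finset α) :
    ∑ x ∈ X, vertexDegree F x ≤ #F * k := by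
  rw [← sum_card_inter_eq_sum_vertexDegree]
  exact sum_le_card_nsmul F _ k fun A hA => (card_le_card inter_subset_right).trans (hF A hA)

lemma sum_card_offDiag_inter_eq_sum_codegree (F : Finset (Finset α)) (X : Finset α) :
    ∑ A ∈ F, #(X ∩ A).offDiag = ∑ p ∈ X.offDiag, codegree F p.1 p.2 := by
  have filter_offDiag (A : Finset α) :
      (X ∩ A).offDiag = {p ∈ X.offDiag | p.1 ∈ A ∧ p.2 ∈ A} := by
    ext p
    simp only [mem_offDiag, mem_inter, mem_filter]
    tauto
  simp_rw [filter_offDiag]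
  exact (sum_card_bipartiteAbove_eq_sum_card_bipartiteBelow
    (fun (p : α × α) A => p.1 ∈ A ∧ p.2 ∈ A)).symm

lemma sum_card_inter_sq_le
    (hD : (X : Set α).Pairwise fun x y => codegree F x y ≤ D) :
    ∑ A ∈ F, #(X ∩ A) ^ 2 ≤ ∑ x ∈ X, vertexDegree F x + #X ^ 2 * D := by
  have sq_card (S : Finset α) : #S ^ 2 = #S + #S.offDiag := by
    rw [offDiag_card, sq, Nat.add_sub_cancel' (Nat.le_mul_self _)]
  have card_offDiag_le : #X.offDiag ≤ #X ^ 2 := sq_card X ▸ Nat.le_add_left _ _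
  calc ∑ A ∈ F, #(X ∩ A) ^ 2
      = ∑ x ∈ X, vertexDegree F x
          + ∑ p ∈ X.offDiag, codegree F p.1 p.2 := by
        simp_rw [sq_card, sum_add_distrib, sum_card_inter_eq_sum_vertexDegree,
          sum_card_offDiag_inter_eq_sum_codegree]
    _ ≤ ∑ x ∈ X, vertexDegree F x + #X.offDiag * D := by
        gcongr
        refine sum_le_card_nsmul _ _ D fun p hp => ?_
        obtain ⟨h₁, h₂, hne⟩ := mem_offDiag.1 hp
        exact hD h₁ h₂ hne
    _ ≤ ∑ x ∈ X, vertexDegree F x + #X ^ 2 * D := by gcongr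

lemma sq_sum_vertexDegree_le
    (hD : (X : Set α).Pairwise fun x y => codegree F x y ≤ D) :
    (∑ x ∈ X, vertexDegree F x) ^ 2 ≤
      #F * (∑ x ∈ X, vertexDegree F x + #X ^ 2 * D) := by
  have cauchy_schwarz : (∑ A ∈ F, #(X ∩ A)) ^ 2 ≤ #F * ∑ A ∈ F, #(X ∩ A) ^ 2 := by
    exact_mod_cast sq_sum_le_card_mul_sum_sq (s := F) (f := fun A => (#(X ∩ A) : ℤ))
  rw [sum_card_inter_eq_sum_vertexDegree] at cauchy_schwarz
  exact cauchy_schwarz.trans (Nat.mul_le_mul_left _ (sum_card_inter_sq_le hD))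

-- Each of the `N` elements of `X` has degree at least `m / t`, so `N ≤ t S / m` for the degree sum
-- `S`, and then `S ^ 2 ≤ m S + m N ^ 2 D ≤ m S + S ^ 2 / 2`.
lemma sum_vertexDegree_le_two_mul_card {t : ℝ}
    (hD : (X : Set α).Pairwise fun x y => codegree F x y ≤ D)
    (hX : ∀ x ∈ X, (#F : ℝ) ≤ t * vertexDegree F x) (ht : 2 * t ^ 2 * D ≤ #F) :
    ∑ x ∈ X, (vertexDegree F x : ℝ) ≤ 2 * #F := by
  obtain rfl | hF := F.eq_empty_or_nonempty
  · simp [vertexDegree]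
  have second_moment : (∑ x ∈ X, (vertexDegree F x : ℝ)) ^ 2 ≤
      #F * (∑ x ∈ X, (vertexDegree F x : ℝ) + (#X : ℝ) ^ 2 * D) := by
    exact_mod_cast sq_sum_vertexDegree_le hD
  set m : ℝ := (#F : ℝ)
  set S : ℝ := ∑ x ∈ X, (vertexDegree F x : ℝ)
  set N : ℝ := (#X : ℝ)
  have hm : 0 < m := Nat.cast_pos.2 hF.card_pos
  have hN : N * m ≤ t * S := by
    rw [mul_sum, ← nsmul_eq_mul]
    exact card_nsmul_le_sum _ _ _ hX
  have off_diagonal : 2 * (N ^ 2 * D * m) ≤ S ^ 2 := by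
    refine le_of_mul_le_mul_left ?_ hm
    calc m * (2 * (N ^ 2 * D * m)) = 2 * (N * m) ^ 2 * D := by ring
      _ ≤ 2 * (t * S) ^ 2 * D := by gcongr
      _ = 2 * t ^ 2 * D * S ^ 2 := by ring
      _ ≤ m * S ^ 2 := by gcongr
  by_contra! hS
  nlinarith

lemma mul_sum_vertexDegree_sq_le {t Δ : ℝ} (hk : ∀ A ∈ F, #A ≤ k) (hΔ₀ : 0 ≤ Δ) (ht₀ : 0 ≤ t)
    (hD : (V : Set α).Pairwise fun x y => codegree F x y ≤ D)
    (hΔ : ∀ x ∈ V, (vertexDegree F x : ℝ) ≤ Δ) (ht : 2 * t ^ 2 * D ≤ #F) :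
    t * ∑ x ∈ V, (vertexDegree F x : ℝ) ^ 2 ≤ k * (#F : ℝ) ^ 2 + 2 * t * Δ * #F := by
  set m : ℝ := (#F : ℝ)
  set d : α → ℝ := fun x => vertexDegree F x
  set heavy := {x ∈ V | m ≤ t * d x}
  set light := {x ∈ V | ¬m ≤ t * d x}
  have heavy_bound : ∑ x ∈ heavy, d x ^ 2 ≤ Δ * (2 * m) := by
    have sum_heavy : ∑ x ∈ heavy, d x ≤ 2 * m :=
      sum_vertexDegree_le_two_mul_card
        (hD.mono (coe_subset.2 (filter_subset _ _)))
        (fun x hx => (mem_filter.1 hx).2) ht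
    calc ∑ x ∈ heavy, d x ^ 2 ≤ ∑ x ∈ heavy, Δ * d x :=
          sum_le_sum fun x hx => by
            rw [sq]
            exact mul_le_mul_of_nonneg_right (hΔ x (mem_filter.1 hx).1) (Nat.cast_nonneg _)
      _ = Δ * ∑ x ∈ heavy, d x := (mul_sum ..).symm
      _ ≤ Δ * (2 * m) := by gcongr
  have light_bound : t * ∑ x ∈ light, d x ^ 2 ≤ m * (m * k) := by
    have sum_light : ∑ x ∈ light, d x ≤ m * k := by
      simp only [d, m]
      exact_mod_cast sum_vertexDegree_le hk light
    calc t * ∑ x ∈ light, d x ^ 2 ≤ ∑ x ∈ light, m * d x := by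
          rw [mul_sum]
          refine sum_le_sum fun x hx => ?_
          rw [sq, ← mul_assoc]
          exact mul_le_mul_of_nonneg_right (not_le.1 (mem_filter.1 hx).2).le (Nat.cast_nonneg _)
      _ = m * ∑ x ∈ light, d x := (mul_sum ..).symm
      _ ≤ m * (m * k) := by gcongr
  calc t * ∑ x ∈ V, d x ^ 2
      = t * ∑ x ∈ light, d x ^ 2 + t * ∑ x ∈ heavy, d x ^ 2 := by
        rw [← sum_filter_not_add_sum_filter V (fun x => m ≤ t * d x), mul_add]
    _ ≤ m * (m * k) + t * (Δ * (2 * m)) := by gcongr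
    _ = k * m ^ 2 + 2 * t * Δ * m := by ring

theorem exists_mem_card_div_le_vertexDegree {s : ℝ} (hs : 0 < s) (hV : V.Nonempty)
    (hFV : ∀ A ∈ F, A ⊆ V) (hk₀ : 0 < k) (hk : ∀ A ∈ F, #A ≤ k)
    (hD : (V : Set α).Pairwise fun x y => codegree F x y ≤ D)
    (hcard : 8 * k ^ 2 * s ^ 2 * D ≤ #F)
    (hI : (#F : ℝ) ^ 2 ≤ s * (∑ A ∈ F, ∑ B ∈ F, #(A ∩ B) : ℕ)) :
    ∃ x ∈ V, (#F : ℝ) / (4 * s) ≤ vertexDegree F x := by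
  obtain ⟨x, hxV, hmax⟩ := exists_max_image V (vertexDegree F) hV
  refine ⟨x, hxV, ?_⟩
  obtain hF | hF := (#F).eq_zero_or_pos
  · simp [hF]
  set m : ℝ := (#F : ℝ)
  set Δ : ℝ := (vertexDegree F x : ℝ)
  have hm : 0 < m := Nat.cast_pos.2 hF
  have upper := mul_sum_vertexDegree_sq_le (t := 2 * k * s) hk (Nat.cast_nonneg _)
    (by positivity) hD (fun y hy => Nat.cast_le.2 (hmax y hy)) (by linarith)
  rw [sum_sum_card_inter_eq_sum_vertexDegree_sq hFV] at hI
  push_cast at hI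
  have card_sq_le : 2 * k * m ^ 2 ≤ k * m ^ 2 + 2 * (2 * k * s) * Δ * m := by
    calc 2 * k * m ^ 2 ≤ 2 * k * (s * ∑ y ∈ V, (vertexDegree F y : ℝ) ^ 2) := by gcongr
      _ ≤ _ := by linarith
  rw [div_le_iff₀ (by positivity)]
  refine le_of_mul_le_mul_left (a := k * m) ?_ (by positivity)
  linarith

lemma card_mul_codegree_le (hF : F ⊆ V.powersetCard k) {x y : α} (hxy : x ≠ y) :
    #V * codegree F x y ≤ k * (#V - 1).choose (k - 1) := by
  obtain hempty | ⟨A, hA⟩ := {A ∈ F | x ∈ A ∧ y ∈ A}.eq_empty_or_nonempty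
  · simp [codegree, hempty]
  obtain ⟨hAF, hpair⟩ := mem_filter.1 hA
  obtain ⟨hAV, hAk⟩ := mem_powersetCard.1 (hF hAF)
  have mem_and_mem_iff (B : Finset α) : x ∈ B ∧ y ∈ B ↔ {x, y} ⊆ B := by
    rw [insert_subset_iff, singleton_subset_iff]
  simp only [codegree, mem_and_mem_iff] at hpair ⊢
  have hk : #{x, y} ≤ k := hAk ▸ card_le_card hpair
  have hcodegree : #{A ∈ F | {x, y} ⊆ A} ≤ (#V - 2).choose (k - 2) :=
    calc #{A ∈ F | {x, y} ⊆ A} ≤ #{A ∈ V.powersetCard k | {x, y} ⊆ A} := by gcongr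
      _ = (#V - 2).choose (k - 2) := by
        rw [card_filter_powersetCard_subset _ _ _ (hpair.trans hAV) hk, card_pair hxy]
  rw [card_pair hxy] at hk
  obtain ⟨b, rfl⟩ := Nat.exists_eq_add_of_le' hk
  obtain ⟨a, ha⟩ := Nat.exists_eq_add_of_le' (hk.trans (hAk ▸ card_le_card hAV))
  rw [ha] at hcodegree ⊢
  exact (Nat.mul_le_mul_left _ hcodegree).trans (add_two_mul_choose_le a b)

theorem exists_mem_card_div_le_vertexDegree_of_subset_powersetCard {s : ℝ} (hs : 0 < s)
    (hV : V.Nonempty) (hk : 0 < k) (hF : F ⊆ V.powersetCard k)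
    (hcard : 8 * (k : ℝ) ^ 3 * s ^ 2 * (#V - 1).choose (k - 1) ≤ #V * #F)
    (hI : (#F : ℝ) ^ 2 ≤ s * (∑ A ∈ F, ∑ B ∈ F, #(A ∩ B) : ℕ)) :
    ∃ x ∈ V, (#F : ℝ) / (4 * s) ≤ vertexDegree F x := by
  have hcodegree : (V : Set α).Pairwise fun x y =>
      codegree F x y ≤ k * (#V - 1).choose (k - 1) / #V := fun x _ y _ hxy =>
    (Nat.le_div_iff_mul_le hV.card_pos).2 (mul_comm #V _ ▸ card_mul_codegree_le hF hxy)
  refine exists_mem_card_div_le_vertexDegree hs hV (fun A hA => (mem_powersetCard.1 (hF hA)).1) hk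
    (fun A hA => (mem_powersetCard.1 (hF hA)).2.le) hcodegree ?_ hI
  calc 8 * (k : ℝ) ^ 2 * s ^ 2 * (k * (#V - 1).choose (k - 1) / #V : ℕ)
      ≤ 8 * (k : ℝ) ^ 2 * s ^ 2 * ((k * (#V - 1).choose (k - 1) : ℕ) / #V) := by
        gcongr
        exact Nat.cast_div_le
    _ = 8 * (k : ℝ) ^ 3 * s ^ 2 * (#V - 1).choose (k - 1) / #V := by
        push_cast
        ring
    _ ≤ #F := div_le_of_le_mul₀ (by positivity) (by positivity) (by linarith)

end Hypergraph

lemma mul_choose_le_mul_sum_choose {r n : ℕ} {δ c : ℝ} (hδ₀ : 0 ≤ δ)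
    (hn : c * (r + 1) ^ 2 ≤ n) (hδ : c ≤ n * δ) (j : ℕ) :
    c * (r + 1) ^ 2 * ((n - 1).choose j : ℝ) ≤
      n * ((∑ i ∈ Icc 1 r, ((n - i).choose j : ℝ)) + δ * ((n - (r + 1)).choose j : ℝ)) := by
  obtain rfl | hr := r.eq_zero_or_pos
  · simpa [mul_assoc] using mul_le_mul_of_nonneg_right hδ (Nat.cast_nonneg ((n - 1).choose j))
  · have first_le_sum : ((n - 1).choose j : ℝ) ≤ ∑ i ∈ Icc 1 r, ((n - i).choose j : ℝ) :=
      single_le_sum (f := fun i => ((n - i).choose j : ℝ)) (fun _ _ => Nat.cast_nonneg _)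
        (mem_Icc.2 ⟨le_rfl, hr⟩)
    gcongr
    exact first_le_sum.trans (le_add_of_nonneg_right (by positivity))

-- Cauchy–Schwarz for the vectors `(1, …, 1, 1)` and `(1, …, 1, δ)` of length `r + 1`.
lemma add_sq_le_add_one_mul {r : ℝ} (hr : 0 ≤ r) (δ : ℝ) :
    (r + δ) ^ 2 ≤ (r + 1) * (r + δ ^ 2) := by
  linarith [mul_nonneg hr (sq_nonneg (1 - δ))]

theorem stmt7_general (k r n : ℕ) (hk : 1 ≤ k) (hn : 8 * (r + 1) ^ 2 * k ^ 3 ≤ n)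
    (δ : ℝ) (hδ : 8 * (k : ℝ) ^ 3 / (n : ℝ) ≤ δ)
    (F : Finset (Finset ℕ)) (hF : F ⊆ (Icc 1 n).powersetCard k)
    (hcard : (F.card : ℝ) =
      (∑ i ∈ Icc 1 r, ((n - i).choose (k - 1) : ℝ)) + δ * ((n - (r + 1)).choose (k - 1) : ℝ))
    (hI : ((r : ℝ) + δ ^ 2) / ((r : ℝ) + δ) ^ 2 * (F.card : ℝ) ^ 2 ≤ (totalInt F : ℝ)) :
    ∃ x ∈ Icc 1 n, (F.card : ℝ) / (4 * ((r : ℝ) + 1)) ≤ (degF F {x} : ℝ) := by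
  have hn₀ : 0 < n := lt_of_lt_of_le (by positivity) hn
  have hδ₀ : 0 < δ := lt_of_lt_of_le (by positivity) hδ
  have hn_real : 8 * (k : ℝ) ^ 3 * (r + 1) ^ 2 ≤ n := by
    rw [mul_right_comm]
    exact_mod_cast hn
  have hsize : 8 * (k : ℝ) ^ 3 * (r + 1) ^ 2 * (n - 1).choose (k - 1) ≤ n * #F := by
    rw [hcard]
    exact mul_choose_le_mul_sum_choose hδ₀.le hn_real
      ((div_le_iff₀' (Nat.cast_pos.2 hn₀)).1 hδ) (k - 1)
  have card_sq_le : (#F : ℝ) ^ 2 ≤ (r + 1) * totalInt F :=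
    calc (#F : ℝ) ^ 2
        ≤ (r + 1) * ((r + δ ^ 2) / (r + δ) ^ 2) * (#F : ℝ) ^ 2 :=
          le_mul_of_one_le_left (sq_nonneg _) <| by
            rw [← mul_div_assoc, one_le_div (by positivity)]
            exact add_sq_le_add_one_mul r.cast_nonneg δ
      _ ≤ (r + 1) * totalInt F := by
          rw [mul_assoc]
          gcongr
  simpa only [degF, vertexDegree, singleton_subset_iff] using
    exists_mem_card_div_le_vertexDegree_of_subset_powersetCard (by positivity)
      (nonempty_Icc.2 hn₀) hk hF (by simpa using hsize) card_sq_le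

/-- **Lemma.** If `F` has size `∑_{i=1}^{r} C(n−i,k−1) + δ·C(n−(r+1),k−1)` with
`δ ∈ [150k³/n, 1]` and `I(F) ≥ ((r+δ²)/(r+δ)²)·|F|²`, then some element `x ∈ [n]` has
degree at least `|F|/(4(r+1))`. -/
theorem stmt7 (k r n : ℕ) (hk : 2 ≤ k)
    (hn : 3000 * (r + 1) ^ 3 * (k + r) * k ^ 2 ≤ n)
    (δ : ℝ) (hδ : 150 * (k : ℝ) ^ 3 / (n : ℝ) ≤ δ ∧ δ ≤ 1)
    (F : Finset (Finset ℕ)) (hF : F ⊆ (Icc 1 n).powersetCard k)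
    (hcard : (F.card : ℝ) =
      (∑ i ∈ Icc 1 r, ((n - i).choose (k - 1) : ℝ)) + δ * ((n - (r + 1)).choose (k - 1) : ℝ))
    (hI : ((r : ℝ) + δ ^ 2) / ((r : ℝ) + δ) ^ 2 * (F.card : ℝ) ^ 2 ≤ (totalInt F : ℝ)) :
    ∃ x ∈ Icc 1 n, (F.card : ℝ) / (4 * ((r : ℝ) + 1)) ≤ (degF F {x} : ℝ) := by
  have hn' : 8 * (r + 1) ^ 2 * k ^ 3 ≤ n :=
    le_trans (by rw [pow_succ' k 2, ← mul_assoc]; gcongr <;> omega) hn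
  exact stmt7_general k r n (by omega) hn' δ (le_trans (by gcongr; norm_num) hδ.1) F hF hcard hI
end

section
/- Let k ≥ 2 and r ≥ 0 be fixed integers, let n ≥ 3000·(r+1)³·(k+r)·k², and let δ ∈ [150k³(r+1)²/n, 1 − 150k³(r+1)³/n] ∪ {1} be such that M := Σ_{i=1}^{r} C(n−i, k−1) + δ·C(n−(r+1), k−1) is an integer. Suppose F ⊆ C([n],k) has |F| = M and satisfies I(F) = MI(F). If F does not contain any full 1-star, then F has a cover A ⊆ [n] of size r+1, i.e. a set A with |A| = r+1 such that A ∩ F ≠ ∅ for every F ∈ F. -/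
open Finset

/-!
Write `M = |F|`, let `d x` be the degree of `x` in `F`, and let `D = C(n-2, k-2)` bound the
codegrees; the size hypotheses make `D` tiny compared with `M`. Three facts drive the proof, with
`R = r + 1`.

* By double counting `I(F) = ∑ d(x)²`. Comparing `F` with a family of the same size all of whose
  members meet a fixed `R`-set, Cauchy–Schwarz gives `M² ≤ R · I(F)`.
* Let `P` be the maximum degree, attained at `x`. As `F` misses some `B ∋ x`, exchanging any
  `A ∈ F` for `B` does not increase `I(F)`, so the degrees along `A` sum to at least `P`.
* By Bonferroni the degrees along a set `S` sum to at most `M + |S|² D / 2`.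

Let `S` be the set of vertices of degree more than `2M / (5kR)`. The third fact gives `|S| ≤ 3kR`,
the first then gives `P > 2M / (5R)`, and so by the second `S` is a cover. Hence vertices outside
`S` have degree at most `|S| D`. A vertex of `S` is more frequent than that, so some member of `F`
meets `S` in this vertex only, which forces its degree to be at least `P - k |S| D`. Up to small
errors `S` thus consists of vertices of degree `P`, with total degree `|S| P ≤ M`, whereas
`M² ≤ R P M`; therefore `|S| ≤ R`.
-/

lemma mul_sum_sq_le {ι : Type*} [DecidableEq ι] {S V : Finset ι} (hSV : S ⊆ V) {d : ι → ℕ}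
    {P a b : ℕ} (hP : ∀ x ∈ S, d x ≤ P) (hb : ∀ x ∈ V \ S, a * d x ≤ b) :
    a * ∑ x ∈ V, d x ^ 2 ≤ a * (P * ∑ x ∈ S, d x) + b * ∑ x ∈ V, d x := by
  have hS : ∑ x ∈ S, d x ^ 2 ≤ P * ∑ x ∈ S, d x := by
    rw [mul_sum]
    exact sum_le_sum fun x hx => by rw [sq]; exact Nat.mul_le_mul_right _ (hP x hx)
  have hVS : a * ∑ x ∈ V \ S, d x ^ 2 ≤ b * ∑ x ∈ V, d x := by
    calc a * ∑ x ∈ V \ S, d x ^ 2 ≤ b * ∑ x ∈ V \ S, d x := by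
          rw [mul_sum, mul_sum]
          refine sum_le_sum fun x hx => ?_
          rw [sq, ← mul_assoc]
          exact Nat.mul_le_mul_right _ (hb x hx)
      _ ≤ b * ∑ x ∈ V, d x := by gcongr; exact sdiff_subset
  rw [← sum_sdiff hSV, mul_add, add_comm]
  gcongr

variable {V S : Finset ℕ} {F : Finset (Finset ℕ)} {n k r R D P : ℕ}

/-! ### Degrees -/

lemma degF_singleton (F : Finset (Finset ℕ)) (x : ℕ) : degF F {x} = #{A ∈ F | x ∈ A} := by
  simp only [degF, singleton_subset_iff]

lemma sum_degF_singleton (F : Finset (Finset ℕ)) (S : Finset ℕ) :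
    ∑ x ∈ S, degF F {x} = ∑ A ∈ F, #(A ∩ S) := by
  simp only [degF_singleton, card_filter]
  rw [sum_comm]
  refine sum_congr rfl fun A _ => ?_
  rw [← card_filter, filter_mem_eq_inter, inter_comm]

lemma sum_degF_pair (F : Finset (Finset ℕ)) (S : Finset ℕ) :
    ∑ x ∈ S, ∑ y ∈ S, degF F {x, y} = ∑ A ∈ F, #(A ∩ S) ^ 2 := by
  have hpairs (A : Finset ℕ) : #(A ∩ S) ^ 2 = #{p ∈ S ×ˢ S | {p.1, p.2} ⊆ A} := by
    rw [sq, ← card_product]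
    congr 1
    ext ⟨x, y⟩
    simp only [mem_product, mem_inter, mem_filter, insert_subset_iff, singleton_subset_iff]
    tauto
  rw [← sum_product']
  simp only [hpairs, degF, card_filter]
  exact sum_comm

lemma sum_degF_of_subset_powersetCard (hF : F ⊆ V.powersetCard k) :
    ∑ x ∈ V, degF F {x} = #F * k := by
  rw [sum_degF_singleton]
  refine sum_const_nat fun A hA => ?_
  obtain ⟨hAV, hAk⟩ := mem_powersetCard.1 (hF hA)
  rw [inter_eq_left.2 hAV, hAk]

lemma totalInt_eq_sum_degF_sq (hF : ∀ A ∈ F, A ⊆ V) :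
    totalInt F = ∑ x ∈ V, degF F {x} ^ 2 := by
  calc totalInt F = ∑ A ∈ F, ∑ x ∈ A, degF F {x} :=
        sum_congr rfl fun A _ => by simp only [sum_degF_singleton, inter_comm A]
    _ = ∑ A ∈ F, ∑ x ∈ V, if x ∈ A then degF F {x} else 0 :=
        sum_congr rfl fun A hA => by
          rw [← sum_filter, filter_mem_eq_inter, inter_eq_right.2 (hF A hA)]
    _ = ∑ x ∈ V, degF F {x} ^ 2 := by
        rw [sum_comm]
        refine sum_congr rfl fun x _ => ?_
        rw [← sum_filter, sum_const, smul_eq_mul, ← degF_singleton, sq]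

lemma degF_le_choose (hF : F ⊆ V.powersetCard k) (T : Finset ℕ) :
    degF F T ≤ (#V - #T).choose (k - #T) := by
  rcases Nat.eq_zero_or_pos (degF F T) with hzero | hpos
  · simp only [hzero, Nat.zero_le]
  · obtain ⟨A, hA⟩ := card_pos.1 hpos
    obtain ⟨hAF, hTA⟩ := mem_filter.1 hA
    obtain ⟨hAV, hAk⟩ := mem_powersetCard.1 (hF hAF)
    rw [← card_filter_powersetCard_subset T V k (hTA.trans hAV) (hAk ▸ card_le_card hTA)]
    exact card_le_card (filter_subset_filter _ hF)

lemma degF_pair_le_choose (hF : F ⊆ V.powersetCard k) (x y : ℕ) (hxy : x ≠ y) :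
    degF F {x, y} ≤ (#V - 2).choose (k - 2) := by
  simpa only [card_pair hxy] using degF_le_choose hF {x, y}

/-! ### Consequences of a codegree bound -/

/-- Bonferroni's inequality; the doubling avoids halves. -/
lemma two_mul_sum_degF_le (hD : ∀ x y, x ≠ y → degF F {x, y} ≤ D) (S : Finset ℕ) :
    2 * ∑ x ∈ S, degF F {x} ≤ 2 * #F + #S ^ 2 * D := by
  have hpairs : ∑ A ∈ F, #(A ∩ S) ^ 2 ≤ ∑ x ∈ S, degF F {x} + #S ^ 2 * D := by
    calc ∑ A ∈ F, #(A ∩ S) ^ 2 = ∑ x ∈ S, ∑ y ∈ S, degF F {x, y} := (sum_degF_pair F S).symm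
      _ ≤ ∑ x ∈ S, (degF F {x} + #S * D) := by
          refine sum_le_sum fun x hx => ?_
          rw [← add_sum_erase _ _ hx, pair_eq_singleton]
          gcongr
          calc ∑ y ∈ S.erase x, degF F {x, y} ≤ #(S.erase x) * D :=
                sum_le_card_nsmul _ _ _ fun y hy => hD x y (ne_of_mem_erase hy).symm
            _ ≤ #S * D := by gcongr; exact erase_subset x S
      _ = ∑ x ∈ S, degF F {x} + #S ^ 2 * D := by
          rw [sum_add_distrib, sum_const, smul_eq_mul, sq, mul_assoc]
  -- summing `(j - 1) * (j - 2) ≥ 0` over the members of `F`, where `j = #(A ∩ S)`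
  have hquad : 3 * ∑ A ∈ F, #(A ∩ S) ≤ ∑ A ∈ F, #(A ∩ S) ^ 2 + #F * 2 := by
    rw [mul_sum, ← smul_eq_mul #F, ← sum_const, ← sum_add_distrib]
    refine sum_le_sum fun A _ => ?_
    generalize #(A ∩ S) = j
    rcases j with _ | _ | j
    · simp
    · simp
    · nlinarith
  rw [← sum_degF_singleton] at hquad
  omega

lemma degF_le_of_forall_inter_nonempty (hD : ∀ x y, x ≠ y → degF F {x, y} ≤ D) {x : ℕ}
    (hx : x ∉ S) (hmeet : ∀ A ∈ F, x ∈ A → (S ∩ A).Nonempty) :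
    degF F {x} ≤ #S * D := by
  have hunion : {A ∈ F | {x} ⊆ A} ⊆ S.biUnion fun y => {A ∈ F | {x, y} ⊆ A} := by
    intro A hA
    rw [mem_filter, singleton_subset_iff] at hA
    obtain ⟨y, hy⟩ := hmeet A hA.1 hA.2
    rw [mem_inter] at hy
    exact mem_biUnion.2 ⟨y, hy.1, mem_filter.2 ⟨hA.1, by simp [insert_subset_iff, hA.2, hy.2]⟩⟩
  calc degF F {x} ≤ ∑ y ∈ S, degF F {x, y} := (card_le_card hunion).trans card_biUnion_le
    _ ≤ #S * D := sum_le_card_nsmul _ _ _ fun y hy => hD x y fun hxy => hx (hxy ▸ hy)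

/-! ### Optimal families -/

/-- `F` is a family of `k`-subsets of `V` attaining the maximum total intersection among families
of its size, that is, `I(F) = MI(F)`. -/
structure IsOptimalFamily (V : Finset ℕ) (k : ℕ) (F : Finset (Finset ℕ)) : Prop where
  subset : F ⊆ V.powersetCard k
  totalInt_le : ∀ G ⊆ V.powersetCard k, #G = #F → totalInt G ≤ totalInt F

lemma totalInt_insert {B : Finset ℕ} (hB : B ∉ F) :
    totalInt (insert B F) = totalInt F + 2 * ∑ x ∈ B, degF F {x} + #B := by
  simp only [totalInt, sum_insert hB, sum_add_distrib, inter_self, sum_degF_singleton,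
    inter_comm B]
  ring

lemma sum_degF_insert {A : Finset ℕ} (hA : A ∉ F) (S : Finset ℕ) :
    ∑ x ∈ S, degF (insert A F) {x} = #(A ∩ S) + ∑ x ∈ S, degF F {x} := by
  simp only [sum_degF_singleton, sum_insert hA]

lemma IsOptimalFamily.sum_degF_le (hF : IsOptimalFamily V k F) {A B : Finset ℕ} (hA : A ∈ F)
    (hB : B ∈ V.powersetCard k) (hBF : B ∉ F) :
    ∑ x ∈ B, degF F {x} ≤ ∑ x ∈ A, degF F {x} := by
  obtain ⟨H, hAH, rfl⟩ : ∃ H, A ∉ H ∧ insert A H = F :=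
    ⟨F.erase A, notMem_erase A F, insert_erase hA⟩
  have hBH : B ∉ H := fun h => hBF (mem_insert_of_mem h)
  have hexchange : totalInt (insert B H) ≤ totalInt (insert A H) := by
    refine hF.totalInt_le _ (insert_subset hB ((subset_insert A H).trans hF.subset)) ?_
    rw [card_insert_of_notMem hBH, card_insert_of_notMem hAH]
  have hAB : #(A ∩ B) ≤ #B := card_le_card inter_subset_right
  have hcard : #A = #B :=
    (mem_powersetCard.1 (hF.subset hA)).2.trans (mem_powersetCard.1 hB).2.symm
  rw [totalInt_insert hBH, totalInt_insert hAH] at hexchange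
  rw [sum_degF_insert hAH, sum_degF_insert hAH, inter_self]
  omega

lemma IsOptimalFamily.degF_le_sum (hF : IsOptimalFamily V k F) {A B : Finset ℕ} {x : ℕ}
    (hA : A ∈ F) (hB : B ∈ V.powersetCard k) (hBF : B ∉ F) (hx : x ∈ B) :
    degF F {x} ≤ ∑ y ∈ A, degF F {y} :=
  (single_le_sum (f := fun y => degF F {y}) (fun _ _ => Nat.zero_le _) hx).trans
    (hF.sum_degF_le hA hB hBF)

lemma card_sq_le_mul_totalInt {C : Finset ℕ} (hC : ∀ A ∈ F, (A ∩ C).Nonempty) :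
    #F ^ 2 ≤ #C * totalInt F := by
  have hsum : #F ≤ ∑ x ∈ C, degF F {x} := by
    rw [sum_degF_singleton, card_eq_sum_ones]
    exact sum_le_sum fun A hA => card_pos.2 (hC A hA)
  have hsub : ∀ A ∈ F, A ⊆ C ∪ F.biUnion id := fun A hA =>
    (subset_biUnion_of_mem id hA).trans subset_union_right
  calc #F ^ 2 ≤ (∑ x ∈ C, degF F {x}) ^ 2 := by gcongr
    _ ≤ #C * ∑ x ∈ C, degF F {x} ^ 2 := sq_sum_le_card_mul_sum_sq
    _ ≤ #C * totalInt F := by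
        rw [totalInt_eq_sum_degF_sq hsub]
        gcongr
        exact subset_union_left

lemma card_filter_inter_nonempty_add_choose {C : Finset ℕ} (hC : C ⊆ V) (k : ℕ) :
    #{A ∈ V.powersetCard k | (A ∩ C).Nonempty} + (#V - #C).choose k = (#V).choose k := by
  have hdisj : {A ∈ V.powersetCard k | ¬ (A ∩ C).Nonempty} = (V \ C).powersetCard k := by
    ext A
    simp only [mem_filter, mem_powersetCard, subset_sdiff, not_nonempty_iff_eq_empty,
      disjoint_iff_inter_eq_empty]
    tauto
  rw [← card_sdiff_of_subset hC, ← card_powersetCard k (V \ C), ← hdisj,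
    card_filter_add_card_filter_not, card_powersetCard]

lemma sum_choose_sub_add_choose (hk : 0 < k) (hR : R ≤ n) :
    ∑ i ∈ Icc 1 R, (n - i).choose (k - 1) + (n - R).choose k = n.choose k := by
  induction R with
  | zero => simp
  | succ R ih =>
    rw [← ih (by omega), sum_Icc_succ_top (by omega), add_assoc]
    obtain ⟨j, rfl⟩ := Nat.exists_eq_add_of_le' hk
    obtain ⟨m, hm⟩ := Nat.exists_eq_add_of_le' (Nat.sub_pos_of_lt hR)
    rw [show n - (R + 1) = m by omega, hm, Nat.choose_succ_succ, Nat.add_sub_cancel]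

lemma IsOptimalFamily.card_sq_le (hF : IsOptimalFamily (Icc 1 n) k F) (hk : 0 < k) (hR : R ≤ n)
    (hcard : #F ≤ ∑ i ∈ Icc 1 R, (n - i).choose (k - 1)) :
    #F ^ 2 ≤ R * totalInt F := by
  have hmany : #F ≤ #{A ∈ (Icc 1 n).powersetCard k | (A ∩ Icc 1 R).Nonempty} := by
    have hcount := card_filter_inter_nonempty_add_choose (Icc_subset_Icc_right (a := 1) hR) k
    have htele := sum_choose_sub_add_choose hk hR
    rw [Nat.card_Icc, Nat.card_Icc, Nat.add_sub_cancel, Nat.add_sub_cancel] at hcount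
    omega
  obtain ⟨G, hG, hGF⟩ := exists_subset_card_eq hmany
  calc #F ^ 2 = #G ^ 2 := by rw [hGF]
    _ ≤ #(Icc 1 R) * totalInt G := card_sq_le_mul_totalInt fun A hA => (mem_filter.1 (hG hA)).2
    _ ≤ R * totalInt F := by
        rw [Nat.card_Icc, Nat.add_sub_cancel]
        gcongr
        exact hF.totalInt_le G (hG.trans (filter_subset _ _)) hGF

/-! ### Heavy vertices -/

/-- The vertices in `V` of degree greater than `2 |F| / (5kR)`, the candidate for the cover of size
`R`. The threshold lies below `1 / k` of the maximum degree of an optimal family, yet only `O(kR)`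
vertices exceed it. -/
def heavyVertices (V : Finset ℕ) (k R : ℕ) (F : Finset (Finset ℕ)) : Finset ℕ :=
  {x ∈ V | 2 * #F < 5 * k * R * degF F {x}}

lemma mul_sum_degF_le_of_card_le (hD : ∀ x y, x ≠ y → degF F {x, y} ≤ D)
    (hM : 150 * k ^ 2 * R ^ 3 * D ≤ #F) (hS : #S ≤ 3 * k * R) :
    100 * R * ∑ x ∈ S, degF F {x} ≤ (100 * R + 3) * #F := by
  have herror : 50 * R * (#S ^ 2 * D) ≤ 3 * #F := by
    calc 50 * R * (#S ^ 2 * D) ≤ 50 * R * ((3 * k * R) ^ 2 * D) := by gcongr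
      _ = 3 * (150 * k ^ 2 * R ^ 3 * D) := by ring
      _ ≤ 3 * #F := by gcongr
  calc 100 * R * ∑ x ∈ S, degF F {x} = 50 * R * (2 * ∑ x ∈ S, degF F {x}) := by ring
    _ ≤ 50 * R * (2 * #F + #S ^ 2 * D) := by gcongr; exact two_mul_sum_degF_le hD S
    _ = 100 * R * #F + 50 * R * (#S ^ 2 * D) := by ring
    _ ≤ (100 * R + 3) * #F := by rw [add_mul]; gcongr

lemma card_heavyVertices_le (hD : ∀ x y, x ≠ y → degF F {x, y} ≤ D)
    (hM : 150 * k ^ 2 * R ^ 3 * D ≤ #F) :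
    #(heavyVertices V k R F) ≤ 3 * k * R := by
  by_contra! hlt
  obtain ⟨x, hx⟩ := card_pos.1 (Nat.zero_lt_of_lt hlt)
  have hkR : 0 < 5 * k * R := Nat.pos_of_mul_pos_right (Nat.zero_lt_of_lt (mem_filter.1 hx).2)
  obtain ⟨T, hT, hTcard⟩ := exists_subset_card_eq hlt.le
  have hTne : T.Nonempty := card_pos.1 (by rw [hTcard]; linarith)
  have hheavy : k * R * (6 * #F) < k * R * (5 * ∑ x ∈ T, degF F {x}) := by
    calc k * R * (6 * #F) = ∑ x ∈ T, 2 * #F := by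
          rw [sum_const, hTcard, smul_eq_mul]; ring
      _ < ∑ x ∈ T, 5 * k * R * degF F {x} :=
          sum_lt_sum_of_nonempty hTne fun x hx => (mem_filter.1 (hT hx)).2
      _ = k * R * (5 * ∑ x ∈ T, degF F {x}) := by rw [← mul_sum]; ring
  have hlarge : 6 * #F < 5 * ∑ x ∈ T, degF F {x} := Nat.lt_of_mul_lt_mul_left hheavy
  have hsmall := mul_sum_degF_le_of_card_le hD hM hTcard.le
  have hR : 1 ≤ R := Nat.pos_of_mul_pos_left hkR
  nlinarith

lemma two_mul_card_lt_mul_of_degF_le (hF : F ⊆ V.powersetCard k)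
    (hD : ∀ x y, x ≠ y → degF F {x, y} ≤ D) (hk : 0 < k) (hne : F.Nonempty)
    (hM : 150 * k ^ 2 * R ^ 3 * D ≤ #F) (hI : #F ^ 2 ≤ R * totalInt F)
    (hP : ∀ x ∈ V, degF F {x} ≤ P) :
    2 * #F < 5 * R * P := by
  set Q := ∑ x ∈ heavyVertices V k R F, degF F {x}
  have hMpos : 0 < #F := card_pos.2 hne
  have hR : 0 < R := Nat.pos_of_mul_pos_right ((pow_pos hMpos 2).trans_le hI)
  have hsplit : 5 * k * R * totalInt F ≤ 5 * k * R * (P * Q) + 2 * #F * (#F * k) := by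
    rw [totalInt_eq_sum_degF_sq fun A hA => (mem_powersetCard.1 (hF hA)).1,
      ← sum_degF_of_subset_powersetCard hF]
    refine mul_sum_sq_le (filter_subset _ V) (fun x hx => hP x (mem_filter.1 hx).1) fun x hx => ?_
    obtain ⟨hxV, hxS⟩ := mem_sdiff.1 hx
    exact not_lt.1 fun hlt => hxS (mem_filter.2 ⟨hxV, hlt⟩)
  have hlower : 3 * #F ^ 2 ≤ 5 * R * P * Q := by
    have hscaled : k * R * (5 * #F ^ 2) ≤ k * R * (5 * R * P * Q + 2 * #F ^ 2) := by
      calc k * R * (5 * #F ^ 2) = 5 * k * R * #F ^ 2 := by ring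
        _ ≤ 5 * k * R * (R * totalInt F) := by gcongr
        _ = R * (5 * k * R * totalInt F) := by ring
        _ ≤ R * (5 * k * R * (P * Q) + 2 * #F * (#F * k)) := by gcongr
        _ = k * R * (5 * R * P * Q + 2 * #F ^ 2) := by ring
    have hcancel := Nat.le_of_mul_le_mul_left hscaled (by positivity)
    omega
  have hupper : 100 * R * Q ≤ 103 * R * #F :=
    (mul_sum_degF_le_of_card_le hD hM (card_heavyVertices_le hD hM)).trans
      (Nat.mul_le_mul_right _ (by omega))
  have hfinal : #F * (300 * #F) ≤ #F * (103 * (5 * R * P)) := by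
    calc #F * (300 * #F) = 100 * (3 * #F ^ 2) := by ring
      _ ≤ 100 * (5 * R * P * Q) := by gcongr
      _ = 5 * P * (100 * R * Q) := by ring
      _ ≤ 5 * P * (103 * R * #F) := by gcongr
      _ = #F * (103 * (5 * R * P)) := by ring
  have := Nat.le_of_mul_le_mul_left hfinal hMpos
  omega

lemma heavyVertices_inter_nonempty (hF : F ⊆ V.powersetCard k) (hk : 0 < k)
    (hP : 2 * #F < 5 * R * P) {A : Finset ℕ} (hA : A ∈ F) (hPA : P ≤ ∑ x ∈ A, degF F {x}) :
    (heavyVertices V k R F ∩ A).Nonempty := by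
  obtain ⟨hAV, hAk⟩ := mem_powersetCard.1 (hF hA)
  obtain ⟨x, hx, hPx⟩ : ∃ x ∈ A, P ≤ k * degF F {x} := by
    refine exists_le_of_sum_le (card_pos.1 (hAk ▸ hk)) ?_
    rw [sum_const, hAk, smul_eq_mul, ← mul_sum]
    gcongr
  refine ⟨x, mem_inter.2 ⟨mem_filter.2 ⟨hAV hx, ?_⟩, hx⟩⟩
  calc 2 * #F < 5 * R * P := hP
    _ ≤ 5 * R * (k * degF F {x}) := by gcongr
    _ = 5 * k * R * degF F {x} := by ring

/-- Since `y` is too frequent for all members through it to meet `S` elsewhere, some member has `y`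
as its only vertex in `S`, and its other vertices have small degree. -/
lemma le_degF_add_of_cover (hF : F ⊆ V.powersetCard k)
    (hD : ∀ x y, x ≠ y → degF F {x, y} ≤ D) (hcover : ∀ A ∈ F, (S ∩ A).Nonempty)
    (hP : ∀ A ∈ F, P ≤ ∑ x ∈ A, degF F {x}) {y : ℕ} (hy : #S * D < degF F {y}) :
    P ≤ degF F {y} + k * (#S * D) := by
  obtain ⟨A, hA, hyA, hAS⟩ : ∃ A ∈ F, y ∈ A ∧ S.erase y ∩ A = ∅ := by
    by_contra! hmeet
    have hle := degF_le_of_forall_inter_nonempty hD (notMem_erase y S) hmeet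
    exact hy.not_ge (hle.trans (Nat.mul_le_mul_right D (card_le_card (erase_subset y S))))
  have hsmall : ∀ x ∈ A.erase y, degF F {x} ≤ #S * D := fun x hx => by
    have hxS : x ∉ S := fun hxS => notMem_empty x <| hAS ▸
      mem_inter.2 ⟨mem_erase.2 ⟨ne_of_mem_erase hx, hxS⟩, mem_of_mem_erase hx⟩
    exact degF_le_of_forall_inter_nonempty hD hxS fun B hB _ => hcover B hB
  calc P ≤ ∑ x ∈ A, degF F {x} := hP A hA
    _ = degF F {y} + ∑ x ∈ A.erase y, degF F {x} := (add_sum_erase _ _ hyA).symm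
    _ ≤ degF F {y} + #(A.erase y) * (#S * D) := by
        gcongr
        exact sum_le_card_nsmul _ _ _ hsmall
    _ ≤ degF F {y} + k * (#S * D) := by
        gcongr
        exact (card_le_card (erase_subset y A)).trans (mem_powersetCard.1 (hF hA)).2.le

lemma totalInt_le_of_cover (hF : F ⊆ V.powersetCard k)
    (hD : ∀ x y, x ≠ y → degF F {x, y} ≤ D) (hSV : S ⊆ V) (hP : ∀ x ∈ S, degF F {x} ≤ P)
    (hcover : ∀ A ∈ F, (S ∩ A).Nonempty) :
    totalInt F ≤ P * ∑ x ∈ S, degF F {x} + k * (#S * D) * #F := by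
  have hlight : ∀ x ∈ V \ S, 1 * degF F {x} ≤ #S * D := fun x hx =>
    (one_mul _).trans_le <| degF_le_of_forall_inter_nonempty hD (mem_sdiff.1 hx).2
      fun A hA _ => hcover A hA
  have hsplit := mul_sum_sq_le hSV hP hlight
  rw [← totalInt_eq_sum_degF_sq fun A hA => (mem_powersetCard.1 (hF hA)).1,
    sum_degF_of_subset_powersetCard hF, one_mul, one_mul] at hsplit
  exact hsplit.trans_eq (by ring)

/-- The inequality `M² ≤ R P Q` and `Q ≤ M` give `P ≥ Q / R`, which exceeds `Q / (R + 1)` by enough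
to absorb the error terms. -/
lemma add_succ_mul_lt_succ_mul_of_sq_le {R P Q M a : ℕ} (hM : 0 < M)
    (ha : 50 * R ^ 2 * a ≤ M) (hQ : 100 * R * Q ≤ (100 * R + 3) * M)
    (hPQ : M ^ 2 ≤ R * (P * Q + a * M)) :
    Q + (R + 1) * a < (R + 1) * P := by
  by_contra! hP
  have hR : 1 ≤ R := Nat.pos_of_mul_pos_right ((pow_pos hM 2).trans_le hPQ)
  have hsquare : (100 * R * Q) ^ 2 ≤ ((100 * R + 3) * M) ^ 2 := by gcongr
  have hQM : 100 * (Q + M) ≤ 203 * M := by nlinarith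
  have hquadratic : (R + 1) * M ^ 2 ≤ R * (Q ^ 2 + (R + 1) * a * (Q + M)) := by
    calc (R + 1) * M ^ 2 ≤ (R + 1) * (R * (P * Q + a * M)) := by gcongr
      _ = R * ((R + 1) * P * Q + (R + 1) * a * M) := by ring
      _ ≤ R * ((Q + (R + 1) * a) * Q + (R + 1) * a * M) := by gcongr
      _ = R * (Q ^ 2 + (R + 1) * a * (Q + M)) := by ring
  have herror : 10000 * R ^ 2 * a * (Q + M) ≤ 406 * M ^ 2 := by
    calc 10000 * R ^ 2 * a * (Q + M) = 2 * (50 * R ^ 2 * a) * (100 * (Q + M)) := by ring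
      _ ≤ 2 * M * (203 * M) := by gcongr
      _ = 406 * M ^ 2 := by ring
  have hcompare : 10000 * R * (R + 1) * M ^ 2 ≤ ((100 * R + 3) ^ 2 + 406 * (R + 1)) * M ^ 2 := by
    calc 10000 * R * (R + 1) * M ^ 2 = 10000 * R * ((R + 1) * M ^ 2) := by ring
      _ ≤ 10000 * R * (R * (Q ^ 2 + (R + 1) * a * (Q + M))) := by gcongr
      _ = (100 * R * Q) ^ 2 + (R + 1) * (10000 * R ^ 2 * a * (Q + M)) := by ring
      _ ≤ ((100 * R + 3) * M) ^ 2 + (R + 1) * (406 * M ^ 2) := by gcongr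
      _ = ((100 * R + 3) ^ 2 + 406 * (R + 1)) * M ^ 2 := by ring
  have hcancel := Nat.le_of_mul_le_mul_right hcompare (by positivity)
  nlinarith

lemma mul_card_heavyVertices_mul_le (hD : ∀ x y, x ≠ y → degF F {x, y} ≤ D)
    (hM : 150 * k ^ 2 * R ^ 3 * D ≤ #F) :
    50 * R ^ 2 * (k * (#(heavyVertices V k R F) * D)) ≤ #F := by
  calc 50 * R ^ 2 * (k * (#(heavyVertices V k R F) * D))
      ≤ 50 * R ^ 2 * (k * (3 * k * R * D)) := by gcongr; exact card_heavyVertices_le hD hM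
    _ = 150 * k ^ 2 * R ^ 3 * D := by ring
    _ ≤ #F := hM

lemma card_heavyVertices_mul_lt_degF (hD : ∀ x y, x ≠ y → degF F {x, y} ≤ D)
    (hM : 150 * k ^ 2 * R ^ 3 * D ≤ #F) {y : ℕ} (hy : y ∈ heavyVertices V k R F) :
    #(heavyVertices V k R F) * D < degF F {y} := by
  have hheavy : 2 * #F < 5 * k * R * degF F {y} := (mem_filter.1 hy).2
  have hsmall : 50 * (k * R * (#(heavyVertices V k R F) * D)) ≤ #F := by
    calc 50 * (k * R * (#(heavyVertices V k R F) * D))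
        = 50 * R * (k * (#(heavyVertices V k R F) * D)) := by ring
      _ ≤ 50 * R ^ 2 * (k * (#(heavyVertices V k R F) * D)) := by
          gcongr; exact Nat.le_self_pow (by norm_num) R
      _ ≤ #F := mul_card_heavyVertices_mul_le hD hM
  refine Nat.lt_of_mul_lt_mul_left (a := k * R) ?_
  linarith

lemma card_heavyVertices_le_of_cover (hF : F ⊆ V.powersetCard k)
    (hD : ∀ x y, x ≠ y → degF F {x, y} ≤ D) (hne : F.Nonempty)
    (hM : 150 * k ^ 2 * R ^ 3 * D ≤ #F) (hI : #F ^ 2 ≤ R * totalInt F)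
    (hPV : ∀ x ∈ V, degF F {x} ≤ P) (hPF : ∀ A ∈ F, P ≤ ∑ x ∈ A, degF F {x})
    (hcover : ∀ A ∈ F, (heavyVertices V k R F ∩ A).Nonempty) :
    #(heavyVertices V k R F) ≤ R := by
  set S := heavyVertices V k R F
  set a := k * (#S * D)
  have hPQ : #F ^ 2 ≤ R * (P * ∑ x ∈ S, degF F {x} + a * #F) :=
    hI.trans <| Nat.mul_le_mul_left R <| totalInt_le_of_cover hF hD (filter_subset _ V)
      (fun x hx => hPV x (mem_filter.1 hx).1) hcover
  have hgap : ∑ x ∈ S, degF F {x} + (R + 1) * a < (R + 1) * P :=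
    add_succ_mul_lt_succ_mul_of_sq_le (card_pos.2 hne) (mul_card_heavyVertices_mul_le hD hM)
      (mul_sum_degF_le_of_card_le hD hM (card_heavyVertices_le hD hM)) hPQ
  by_contra! hlt
  have hdegree : ∀ y ∈ S, P - a ≤ degF F {y} := fun y hy => Nat.sub_le_iff_le_add.2 <|
    le_degF_add_of_cover hF hD hcover hPF (card_heavyVertices_mul_lt_degF hD hM hy)
  have hsum : (R + 1) * (P - a) ≤ ∑ x ∈ S, degF F {x} := by
    calc (R + 1) * (P - a) ≤ #S * (P - a) := by gcongr; exact hlt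
      _ ≤ ∑ x ∈ S, degF F {x} := card_nsmul_le_sum _ _ _ hdegree
  have htruncate : (R + 1) * P ≤ (R + 1) * (P - a) + (R + 1) * a := by
    rw [← mul_add]; gcongr; exact le_tsub_add
  omega

/-! ### The size of the family -/

lemma mul_cube_mul_cube_le_of_mul_le (hn : 3000 * (r + 1) ^ 3 * (k + r) * k ^ 2 ≤ n) :
    150 * k ^ 3 * (r + 1) ^ 3 ≤ n := by
  calc 150 * k ^ 3 * (r + 1) ^ 3 = 150 * (r + 1) ^ 3 * k * k ^ 2 := by ring
    _ ≤ 3000 * (r + 1) ^ 3 * (k + r) * k ^ 2 := by gcongr <;> omega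
    _ ≤ n := hn

lemma mul_le_of_mul_cube_mul_cube_le (hn : 150 * k ^ 3 * (r + 1) ^ 3 ≤ n) :
    k * (r + 1) ≤ n := by
  calc k * (r + 1) ≤ (k * (r + 1)) ^ 3 := Nat.le_self_pow (by norm_num) _
    _ ≤ 150 * (k * (r + 1)) ^ 3 := Nat.le_mul_of_pos_left _ (by norm_num)
    _ = 150 * k ^ 3 * (r + 1) ^ 3 := by ring
    _ ≤ n := hn

lemma mul_choose_sub_two_le (hk : 2 ≤ k) (hn : 2 ≤ n) :
    n * (n - 2).choose (k - 2) ≤ k * (n - 1).choose (k - 1) := by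
  obtain ⟨j, rfl⟩ := Nat.exists_eq_add_of_le' hk
  obtain ⟨m, rfl⟩ := Nat.exists_eq_add_of_le' hn
  have habsorb : (m + 1) * m.choose j = (m + 1).choose (j + 1) * (j + 1) :=
    Nat.add_one_mul_choose_eq m j
  have hmono : m.choose j ≤ (m + 1).choose (j + 1) := by
    rw [Nat.choose_succ_succ]; exact Nat.le_add_right _ _
  change (m + 2) * m.choose j ≤ (j + 2) * (m + 1).choose (j + 1)
  linarith

lemma mul_choose_sub_two_le_choose (hk : 2 ≤ k) (hn : 150 * k ^ 3 * (r + 1) ^ 3 ≤ n) :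
    150 * k ^ 2 * (r + 1) ^ 3 * (n - 2).choose (k - 2) ≤ (n - 1).choose (k - 1) := by
  have hn2 : 2 ≤ n :=
    hk.trans ((Nat.le_mul_of_pos_right k r.succ_pos).trans (mul_le_of_mul_cube_mul_cube_le hn))
  refine le_of_mul_le_mul_left (a := k) ?_ (by omega)
  calc k * (150 * k ^ 2 * (r + 1) ^ 3 * (n - 2).choose (k - 2))
      = 150 * k ^ 3 * (r + 1) ^ 3 * (n - 2).choose (k - 2) := by ring
    _ ≤ n * (n - 2).choose (k - 2) := by gcongr
    _ ≤ k * (n - 1).choose (k - 1) := mul_choose_sub_two_le hk hn2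

lemma mul_choose_sub_two_le_mul_choose {δ : ℝ} (hk : 2 ≤ k) (hn : 2 ≤ n)
    (hδ : 150 * (k : ℝ) ^ 3 / n ≤ δ) :
    150 * (k : ℝ) ^ 2 * ((n - 2).choose (k - 2) : ℝ) ≤ δ * ((n - 1).choose (k - 1) : ℝ) := by
  have hn0 : (0 : ℝ) < n := by positivity
  have hδn : 150 * (k : ℝ) ^ 3 ≤ δ * n := (div_le_iff₀ hn0).1 hδ
  have hδn0 : 0 ≤ δ * n := le_trans (by positivity) hδn
  have hchoose : (n : ℝ) * ((n - 2).choose (k - 2) : ℝ) ≤ k * ((n - 1).choose (k - 1) : ℝ) := by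
    exact_mod_cast mul_choose_sub_two_le hk hn
  refine le_of_mul_le_mul_left (a := (n : ℝ) * k) ?_ (by positivity)
  calc n * k * (150 * (k : ℝ) ^ 2 * ((n - 2).choose (k - 2) : ℝ))
      = 150 * (k : ℝ) ^ 3 * (n * ((n - 2).choose (k - 2) : ℝ)) := by ring
    _ ≤ δ * n * (k * ((n - 1).choose (k - 1) : ℝ)) := by gcongr
    _ = n * k * (δ * ((n - 1).choose (k - 1) : ℝ)) := by ring

lemma mul_choose_le_sum_choose_add {δ : ℝ} (hk : 2 ≤ k) (hn : 150 * k ^ 3 * (r + 1) ^ 3 ≤ n)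
    (hδ : 150 * (k : ℝ) ^ 3 * ((r : ℝ) + 1) ^ 2 / n ≤ δ) :
    150 * (k : ℝ) ^ 2 * ((r : ℝ) + 1) ^ 3 * ((n - 2).choose (k - 2) : ℝ) ≤
      (∑ i ∈ Icc 1 r, ((n - i).choose (k - 1) : ℝ)) + δ * ((n - (r + 1)).choose (k - 1) : ℝ) := by
  rcases Nat.eq_zero_or_pos r with rfl | hr
  · have hkn := mul_le_of_mul_cube_mul_cube_le hn
    simpa using mul_choose_sub_two_le_mul_choose hk (by omega) (by simpa using hδ)
  · have hδ0 : 0 ≤ δ := le_trans (by positivity) hδ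
    calc 150 * (k : ℝ) ^ 2 * ((r : ℝ) + 1) ^ 3 * ((n - 2).choose (k - 2) : ℝ)
        ≤ ((n - 1).choose (k - 1) : ℝ) := by exact_mod_cast mul_choose_sub_two_le_choose hk hn
      _ ≤ ∑ i ∈ Icc 1 r, ((n - i).choose (k - 1) : ℝ) :=
          single_le_sum (f := fun i => ((n - i).choose (k - 1) : ℝ))
            (fun _ _ => Nat.cast_nonneg _) (mem_Icc.2 ⟨le_rfl, hr⟩)
      _ ≤ _ := le_add_of_nonneg_right (by positivity)

lemma sum_choose_add_le_sum_choose {δ : ℝ} (hδ : δ ≤ 1) (n k r : ℕ) :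
    (∑ i ∈ Icc 1 r, ((n - i).choose (k - 1) : ℝ)) + δ * ((n - (r + 1)).choose (k - 1) : ℝ) ≤
      ∑ i ∈ Icc 1 (r + 1), ((n - i).choose (k - 1) : ℝ) := by
  rw [sum_Icc_succ_top (by omega)]
  gcongr
  exact mul_le_of_le_one_left (Nat.cast_nonneg _) hδ

lemma div_le_and_le_one_of_gap {δ : ℝ} (hn : 150 * k ^ 3 * (r + 1) ^ 3 ≤ n)
    (hδ : (150 * (k : ℝ) ^ 3 * ((r : ℝ) + 1) ^ 2 / (n : ℝ) ≤ δ ∧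
           δ ≤ 1 - 150 * (k : ℝ) ^ 3 * ((r : ℝ) + 1) ^ 3 / (n : ℝ)) ∨ δ = 1) :
    150 * (k : ℝ) ^ 3 * ((r : ℝ) + 1) ^ 2 / n ≤ δ ∧ δ ≤ 1 := by
  rcases hδ with ⟨hlower, hupper⟩ | rfl
  · exact ⟨hlower, hupper.trans (sub_le_self _ (by positivity))⟩
  · refine ⟨div_le_one_of_le₀ ?_ n.cast_nonneg, le_rfl⟩
    have : 150 * k ^ 3 * (r + 1) ^ 2 ≤ n :=
      le_trans (by gcongr <;> omega) hn
    exact_mod_cast this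

/-! ### The cover -/

lemma exists_notMem_of_not_fullStar_subset {x : ℕ} (h : ¬ fullStar n k {x} ⊆ F) :
    ∃ B ∈ (Icc 1 n).powersetCard k, x ∈ B ∧ B ∉ F := by
  obtain ⟨B, hB, hBF⟩ := not_subset.1 h
  obtain ⟨hBn, hxB⟩ := mem_filter.1 hB
  exact ⟨B, hBn, singleton_subset_iff.1 hxB, hBF⟩

theorem stmt8_general (k R n : ℕ) (hR : R ≤ n) (F : Finset (Finset ℕ))
    (hF : IsOptimalFamily (Icc 1 n) k F)
    (hlower : 150 * k ^ 2 * R ^ 3 * (n - 2).choose (k - 2) ≤ #F)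
    (hupper : #F ≤ ∑ i ∈ Icc 1 R, (n - i).choose (k - 1))
    (hnostar : ¬ ∃ x ∈ Icc 1 n, fullStar n k {x} ⊆ F) :
    ∃ A ⊆ Icc 1 n, #A = R ∧ ∀ B ∈ F, (A ∩ B).Nonempty := by
  rcases F.eq_empty_or_nonempty with rfl | hne
  · exact ⟨Icc 1 R, Icc_subset_Icc_right hR, by simp, by simp⟩
  have hmissing : ∀ x ∈ Icc 1 n, ∃ B ∈ (Icc 1 n).powersetCard k, x ∈ B ∧ B ∉ F := fun x hx =>
    exists_notMem_of_not_fullStar_subset fun hstar => hnostar ⟨x, hx, hstar⟩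
  have hIcc : (Icc 1 R).Nonempty := nonempty_of_sum_ne_zero ((card_pos.2 hne).trans_le hupper).ne'
  obtain ⟨x, hx, hmax⟩ :=
    exists_max_image (Icc 1 n) (fun x => degF F {x}) (hIcc.mono (Icc_subset_Icc_right hR))
  obtain ⟨B, hB, hxB, hBF⟩ := hmissing x hx
  have hk : 0 < k := (mem_powersetCard.1 hB).2 ▸ card_pos.2 ⟨x, hxB⟩
  have hweight : ∀ A ∈ F, degF F {x} ≤ ∑ y ∈ A, degF F {y} := fun A hA =>
    hF.degF_le_sum hA hB hBF hxB
  have hpair : ∀ x y, x ≠ y → degF F {x, y} ≤ (n - 2).choose (k - 2) := by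
    simpa using degF_pair_le_choose hF.subset
  have hI := hF.card_sq_le hk hR hupper
  have hdegree := two_mul_card_lt_mul_of_degF_le hF.subset hpair hk hne hlower hI hmax
  have hcover : ∀ A ∈ F, (heavyVertices (Icc 1 n) k R F ∩ A).Nonempty := fun A hA =>
    heavyVertices_inter_nonempty hF.subset hk hdegree hA (hweight A hA)
  obtain ⟨A, hA, hAn, hAcard⟩ := exists_subsuperset_card_eq (filter_subset _ _)
    (card_heavyVertices_le_of_cover hF.subset hpair hne hlower hI hmax hweight hcover)
    (by simpa using hR)
  exact ⟨A, hAn, hAcard, fun B hB => (hcover B hB).mono (inter_subset_inter_right hA)⟩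

/-- **Lemma.** If `F` is an optimal family (of the size in the main theorem for `t = 1`)
containing no full `1`-star, then `F` has a cover of size `r + 1`. -/
theorem stmt8 (k r n : ℕ) (hk : 2 ≤ k)
    (hn : 3000 * (r + 1) ^ 3 * (k + r) * k ^ 2 ≤ n)
    (δ : ℝ)
    (hδ : (150 * (k : ℝ) ^ 3 * ((r : ℝ) + 1) ^ 2 / (n : ℝ) ≤ δ ∧
           δ ≤ 1 - 150 * (k : ℝ) ^ 3 * ((r : ℝ) + 1) ^ 3 / (n : ℝ)) ∨ δ = 1)
    (F : Finset (Finset ℕ)) (hF : F ⊆ (Icc 1 n).powersetCard k)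
    (hcard : (F.card : ℝ) =
      (∑ i ∈ Icc 1 r, ((n - i).choose (k - 1) : ℝ)) + δ * ((n - (r + 1)).choose (k - 1) : ℝ))
    (hopt : ∀ G ⊆ (Icc 1 n).powersetCard k, G.card = F.card → totalInt G ≤ totalInt F)
    (hnostar : ¬ ∃ x ∈ Icc 1 n, fullStar n k {x} ⊆ F) :
    ∃ A ⊆ Icc 1 n, A.card = r + 1 ∧ ∀ B ∈ F, (A ∩ B).Nonempty := by
  have hn' := mul_cube_mul_cube_le_of_mul_le hn
  have hR : r + 1 ≤ n :=
    (Nat.le_mul_of_pos_left _ (by omega)).trans (mul_le_of_mul_cube_mul_cube_le hn')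
  obtain ⟨hlower, hupper⟩ := div_le_and_le_one_of_gap hn' hδ
  exact stmt8_general k (r + 1) n hR F ⟨hF, hopt⟩
    (by exact_mod_cast (mul_choose_le_sum_choose_add hk hn' hlower).trans_eq hcard.symm)
    (by exact_mod_cast hcard.trans_le (sum_choose_add_le_sum_choose hupper n k r)) hnostar
end

section
/- Let r ≥ 0 be an integer, and let a, b, M be real numbers with 0 ≤ a ≤ b and ra + b ≤ M ≤ (r+1)b. Let r0 be the largest integer with 0 ≤ r0 ≤ r such that M − r0·b ≥ (r+1−r0)·a. Then for all real numbers x_1, …, x_{r+1} with Σ_{i=1}^{r+1} x_i = M and a ≤ x_i ≤ b for each i, one has Σ_{i=1}^{r+1} x_i² ≤ r0·b² + (r − r0)·a² + (M − r0·b − (r − r0)·a)². Moreover, equality holds if and only if, up to a permutation of the coordinates, x_1 = … = x_{r0} = b, x_{r0+1} = M − r0·b − (r − r0)·a, and x_{r0+2} = … = x_{r+1} = a. -/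
open Finset

/-!
Sort `x` in decreasing order and call the result `y`; let `z` be the vector `(b, …, b, c, a, …, a)`
with `c` in position `p` and the same sum as `x`. Every `y i` lies between `d = y p` and `z i`:
before `p` because `d ≤ y i ≤ b`, after `p` because `a ≤ y i ≤ d`. Subtracting from a strictly
convex `f` the linear part of a supporting line at `d` does not affect the comparison of
`∑ f (y i)` with `∑ f (z i)`, and makes `f` strictly increasing away from `d`; so the comparison
holds term by term, strictly where `y i ≠ z i`. At `d = a` or `d = b` a supporting line
may not exist, but there `y` and `z` are comparable with equal sums, hence equal.
-/

section Convex

variable {ι : Type*} [Fintype ι] {f : ℝ → ℝ}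

lemma lt_of_strictConvexOn_of_isMinOn_of_mem_segment {𝕜 E β : Type*} [Field 𝕜] [LinearOrder 𝕜]
    [IsStrictOrderedRing 𝕜] [AddCommGroup E] [Module 𝕜 E] [AddCommMonoid β] [LinearOrder β]
    [IsOrderedAddMonoid β] [Module 𝕜 β] [PosSMulStrictMono 𝕜 β] {s : Set E} {g : E → β}
    {d u v : E} (hg : StrictConvexOn 𝕜 s g) (hmin : IsMinOn g s d) (hd : d ∈ s) (hv : v ∈ s)
    (hu : u ∈ segment 𝕜 d v) (huv : u ≠ v) : g u < g v := by
  have hdv : d ≠ v := by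
    rintro rfl
    exact huv (by simpa using hu)
  have hlt : g d < g v := by
    refine (hmin hv).lt_of_ne fun heq ↦ hdv (hg.eq_of_isMinOn hmin (fun w hw ↦ ?_) hd hv)
    exact heq ▸ hmin hw
  rcases eq_or_ne d u with rfl | hdu
  · exact hlt
  · have hu' : u ∈ openSegment 𝕜 d v := mem_openSegment_of_ne_left_right hdu huv.symm hu
    exact (hg.lt_on_openSegment hd hv hdv hu').trans_eq (max_eq_right hlt.le)

lemma exists_isMinOn_sub_mul_of_mem_interior {s : Set ℝ} {d : ℝ} (hf : ConvexOn ℝ s f)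
    (hd : d ∈ interior s) : ∃ m : ℝ, IsMinOn (fun t ↦ f t - m * t) s d := by
  set m := derivWithin f (Set.Ioi d) d
  have hconv : ConvexOn ℝ s (fun t ↦ f t - m * t) :=
    hf.sub ((LinearMap.mulLeft ℝ m).concaveOn hf.1)
  have hderiv : HasDerivWithinAt (fun t ↦ f t - m * t) (m - m * 1) (Set.Ioi d) d :=
    (hf.hasDerivWithinAt_rightDeriv_of_mem_interior hd).sub
      ((hasDerivWithinAt_id d _).const_mul m)
  refine ⟨m, hconv.isMinOn_of_rightDeriv_eq_zero hd ?_⟩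
  rw [hderiv.derivWithin (uniqueDiffWithinAt_Ioi d), mul_one, sub_self]

lemma sum_lt_sum_of_mem_segment_of_mem_interior {s : Set ℝ} {d : ℝ} {y z : ι → ℝ}
    (hf : StrictConvexOn ℝ s f) (hd : d ∈ interior s) (hz : ∀ i, z i ∈ s)
    (hy : ∀ i, y i ∈ segment ℝ d (z i)) (hsum : ∑ i, y i = ∑ i, z i) (hne : y ≠ z) :
    ∑ i, f (y i) < ∑ i, f (z i) := by
  obtain ⟨m, hmin⟩ := exists_isMinOn_sub_mul_of_mem_interior hf.convexOn hd
  have hconv : StrictConvexOn ℝ s (fun t ↦ f t - m * t) :=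
    hf.sub_concaveOn ((LinearMap.mulLeft ℝ m).concaveOn hf.1)
  have hlt {i : ι} (hi : y i ≠ z i) : f (y i) - m * y i < f (z i) - m * z i :=
    lt_of_strictConvexOn_of_isMinOn_of_mem_segment hconv hmin (interior_subset hd) (hz i) (hy i) hi
  have hle (i : ι) : f (y i) - m * y i ≤ f (z i) - m * z i := by
    rcases eq_or_ne (y i) (z i) with hi | hi
    · rw [hi]
    · exact (hlt hi).le
  obtain ⟨j, hj⟩ := Function.ne_iff.mp hne
  have hsub : ∑ i, (f (y i) - m * y i) < ∑ i, (f (z i) - m * z i) :=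
    sum_lt_sum (fun i _ ↦ hle i) ⟨j, mem_univ j, hlt hj⟩
  simpa only [sum_sub_distrib, ← mul_sum, hsum, sub_lt_sub_iff_right] using hsub

lemma sum_lt_sum_of_mem_segment {a b d : ℝ} {y z : ι → ℝ} (hf : StrictConvexOn ℝ (Set.Icc a b) f)
    (hd : d ∈ Set.Icc a b) (hz : ∀ i, z i ∈ Set.Icc a b) (hy : ∀ i, y i ∈ segment ℝ d (z i))
    (hsum : ∑ i, y i = ∑ i, z i) (hne : y ≠ z) : ∑ i, f (y i) < ∑ i, f (z i) := by
  rcases hd.1.eq_or_lt with rfl | had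
  · have hle : y ≤ z := fun i ↦ (segment_subset_Icc (hz i).1 (hy i)).2
    exact absurd hsum (Fintype.sum_strictMono (hle.lt_of_ne hne)).ne
  rcases hd.2.eq_or_lt with rfl | hdb
  · have hge : z ≤ y := fun i ↦
      (segment_subset_Icc (hz i).2 (segment_symm ℝ d (z i) ▸ hy i)).1
    exact absurd hsum (Fintype.sum_strictMono (hge.lt_of_ne hne.symm)).ne'
  · have hint : d ∈ interior (Set.Icc a b) := by rw [interior_Icc]; exact ⟨had, hdb⟩
    exact sum_lt_sum_of_mem_segment_of_mem_interior hf hint hz hy hsum hne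

end Convex

section StepAt

variable {ι α β : Type*} [LinearOrder ι]

/-- The vector with entries `b` before the index `p`, `c` at `p` and `a` after `p`. For `a ≤ c ≤ b`
it is, up to permutation, the maximiser of `∑ f (x i)`, for every strictly convex `f`, among the
vectors `x` with entries in `[a, b]` and the same sum of entries. -/
def stepAt (p : ι) (b c a : α) (i : ι) : α :=
  if i < p then b else if i = p then c else a

variable {p i : ι}

lemma stepAt_of_lt (b c a : α) (h : i < p) : stepAt p b c a i = b := if_pos h

lemma stepAt_self (p : ι) (b c a : α) : stepAt p b c a p = c := by simp [stepAt]

lemma stepAt_of_gt (b c a : α) (h : p < i) : stepAt p b c a i = a := by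
  simp [stepAt, h.not_gt, h.ne']

lemma apply_stepAt (f : α → β) (p : ι) (b c a : α) (i : ι) :
    f (stepAt p b c a i) = stepAt p (f b) (f c) (f a) i := by
  simp only [stepAt, apply_ite f]

lemma stepAt_mem {s : Set α} {b c a : α} (hb : b ∈ s) (hc : c ∈ s) (ha : a ∈ s) :
    stepAt p b c a i ∈ s := by
  unfold stepAt
  split_ifs <;> assumption

lemma sum_stepAt [Fintype ι] [LocallyFiniteOrderBot ι] [LocallyFiniteOrderTop ι]
    [AddCommMonoid α] (p : ι) (b c a : α) :
    ∑ i, stepAt p b c a i = #(Iio p) • b + c + #(Ioi p) • a := by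
  have hsplit (i : ι) : stepAt p b c a i =
      (if i < p then b else 0) + (if i = p then c else 0) + (if p < i then a else 0) := by
    rcases lt_trichotomy i p with h | rfl | h
    · simp [stepAt_of_lt, h, h.ne, h.not_gt]
    · simp [stepAt_self]
    · simp [stepAt_of_gt, h, h.ne', h.not_gt]
  simp only [hsplit, sum_add_distrib, sum_ite_eq', mem_univ, if_true, ← sum_filter,
    filter_gt_eq_Iio, filter_lt_eq_Ioi, sum_const]

lemma sum_stepAt_fin {R : Type*} [CommRing R] {r : ℕ} (p : Fin (r + 1)) (b c a : R) :
    ∑ i, stepAt p b c a i = p * b + (r - p) * a + c := by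
  rw [sum_stepAt, Fin.card_Iio, Fin.card_Ioi, Nat.add_sub_cancel, nsmul_eq_mul, nsmul_eq_mul,
    Nat.cast_sub p.is_le]
  ring

lemma mem_segment_stepAt_of_antitone {𝕜 : Type*} [Field 𝕜] [LinearOrder 𝕜]
    [IsStrictOrderedRing 𝕜] {a b : 𝕜} {y : ι → 𝕜} (hy : Antitone y)
    (hyab : ∀ i, y i ∈ Set.Icc a b) (p : ι) (c : 𝕜) (i : ι) :
    y i ∈ segment 𝕜 (y p) (stepAt p b c a i) := by
  rcases lt_trichotomy i p with h | rfl | h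
  · rw [stepAt_of_lt b c a h]
    exact Icc_subset_segment ⟨hy h.le, (hyab i).2⟩
  · exact left_mem_segment 𝕜 _ _
  · rw [stepAt_of_gt b c a h, segment_symm]
    exact Icc_subset_segment ⟨(hyab i).1, hy h.le⟩

end StepAt

lemma exists_perm_antitone_comp {n : ℕ} {α : Type*} [LinearOrder α] (x : Fin n → α) :
    ∃ σ : Equiv.Perm (Fin n), Antitone (x ∘ σ) :=
  ⟨Tuple.sort (OrderDual.toDual ∘ x), Tuple.monotone_sort (OrderDual.toDual ∘ x)⟩

theorem sum_le_sum_stepAt_and_eq_iff {n : ℕ} {f : ℝ → ℝ} {a b c : ℝ} {p : Fin n} {x : Fin n → ℝ}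
    (hf : StrictConvexOn ℝ (Set.Icc a b) f) (hc : c ∈ Set.Icc a b) (hx : ∀ i, x i ∈ Set.Icc a b)
    (hsum : ∑ i, x i = ∑ i, stepAt p b c a i) :
    ∑ i, f (x i) ≤ ∑ i, f (stepAt p b c a i) ∧
      (∑ i, f (x i) = ∑ i, f (stepAt p b c a i) ↔
        ∃ σ : Equiv.Perm (Fin n), ∀ i, x (σ i) = stepAt p b c a i) := by
  have hab : a ≤ b := hc.1.trans hc.2
  obtain ⟨τ, hτ⟩ := exists_perm_antitone_comp x
  have hperm (σ : Equiv.Perm (Fin n)) : ∑ i, f (x (σ i)) = ∑ i, f (x i) :=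
    Equiv.sum_comp σ (fun i ↦ f (x i))
  have hlt (hne : x ∘ τ ≠ stepAt p b c a) : ∑ i, f (x i) < ∑ i, f (stepAt p b c a i) :=
    hperm τ ▸ sum_lt_sum_of_mem_segment hf (hx (τ p))
      (fun _ ↦ stepAt_mem (Set.right_mem_Icc.mpr hab) hc (Set.left_mem_Icc.mpr hab))
      (mem_segment_stepAt_of_antitone hτ (fun i ↦ hx (τ i)) p c)
      ((Equiv.sum_comp τ x).trans hsum) hne
  have heq {σ : Equiv.Perm (Fin n)} (hσ : ∀ i, x (σ i) = stepAt p b c a i) :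
      ∑ i, f (x i) = ∑ i, f (stepAt p b c a i) := by
    simp only [← hperm σ, hσ]
  refine ⟨?_, fun h ↦ ⟨τ, congrFun (not_imp_comm.mp hlt h.not_lt)⟩, fun ⟨_, hσ⟩ ↦ heq hσ⟩
  rcases eq_or_ne (x ∘ τ) (stepAt p b c a) with h | h
  · exact (heq (congrFun h)).le
  · exact (hlt h).le

theorem stmt15_general {f : ℝ → ℝ} (r : ℕ) (a b M : ℝ) (hf : StrictConvexOn ℝ (Set.Icc a b) f)
    (r0 : ℕ) (hr0r : r0 ≤ r)
    (hr0 : ((r : ℝ) + 1 - (r0 : ℝ)) * a ≤ M - (r0 : ℝ) * b)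
    (hr0max : ∀ s : ℕ, s ≤ r → ((r : ℝ) + 1 - (s : ℝ)) * a ≤ M - (s : ℝ) * b → s ≤ r0)
    (x : Fin (r + 1) → ℝ) (hsum : ∑ i, x i = M) (hx : ∀ i, a ≤ x i ∧ x i ≤ b) :
    (∑ i, f (x i) ≤
      (r0 : ℝ) * f b + ((r : ℝ) - (r0 : ℝ)) * f a +
        f (M - (r0 : ℝ) * b - ((r : ℝ) - (r0 : ℝ)) * a)) ∧
    ((∑ i, f (x i) =
        (r0 : ℝ) * f b + ((r : ℝ) - (r0 : ℝ)) * f a +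
          f (M - (r0 : ℝ) * b - ((r : ℝ) - (r0 : ℝ)) * a)) ↔
      ∃ σ : Equiv.Perm (Fin (r + 1)), ∀ i : Fin (r + 1),
        x (σ i) = if (i : ℕ) < r0 then b
          else if (i : ℕ) = r0 then M - (r0 : ℝ) * b - ((r : ℝ) - (r0 : ℝ)) * a
          else a) := by
  set c : ℝ := M - (r0 : ℝ) * b - ((r : ℝ) - (r0 : ℝ)) * a with hc
  have hac : a ≤ c := by linarith
  have hcb : c ≤ b := by
    rcases hr0r.eq_or_lt with rfl | hlt
    · have hM : M ≤ (r0 + 1) * b := by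
        simpa [hsum] using sum_le_card_nsmul univ x b fun i _ ↦ (hx i).2
      linarith
    · by_contra! hbc
      have := hr0max (r0 + 1) hlt (by push_cast; linarith)
      omega
  let p : Fin (r + 1) := ⟨r0, Nat.lt_succ_of_le hr0r⟩
  have hsum' : ∑ i, x i = ∑ i, stepAt p b c a i := by
    rw [hsum, sum_stepAt_fin, hc]
    ring
  have hmax := sum_le_sum_stepAt_and_eq_iff hf ⟨hac, hcb⟩ hx hsum'
  simp only [apply_stepAt f, sum_stepAt_fin] at hmax
  simpa only [stepAt, p, Fin.lt_def, Fin.ext_iff] using hmax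

/-- **Theorem (convexity).** Maximization of `∑ xᵢ²` over the polytope
`{x ∈ ℝ^{r+1} : ∑ xᵢ = M, a ≤ xᵢ ≤ b}`, with the equality case characterized up to a
permutation of the coordinates. Here `r0` is the largest integer `0 ≤ r0 ≤ r` with
`M − r0·b ≥ (r+1−r0)·a`. -/
theorem stmt15 (r : ℕ) (a b M : ℝ) (ha : 0 ≤ a) (hab : a ≤ b)
    (hM1 : (r : ℝ) * a + b ≤ M) (hM2 : M ≤ ((r : ℝ) + 1) * b)
    (r0 : ℕ) (hr0r : r0 ≤ r)
    (hr0 : ((r : ℝ) + 1 - (r0 : ℝ)) * a ≤ M - (r0 : ℝ) * b)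
    (hr0max : ∀ s : ℕ, s ≤ r → ((r : ℝ) + 1 - (s : ℝ)) * a ≤ M - (s : ℝ) * b → s ≤ r0)
    (x : Fin (r + 1) → ℝ) (hsum : ∑ i, x i = M)
    (hx : ∀ i, a ≤ x i ∧ x i ≤ b) :
    (∑ i, x i ^ 2 ≤
      (r0 : ℝ) * b ^ 2 + ((r : ℝ) - (r0 : ℝ)) * a ^ 2 +
        (M - (r0 : ℝ) * b - ((r : ℝ) - (r0 : ℝ)) * a) ^ 2) ∧
    ((∑ i, x i ^ 2 =
        (r0 : ℝ) * b ^ 2 + ((r : ℝ) - (r0 : ℝ)) * a ^ 2 +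
          (M - (r0 : ℝ) * b - ((r : ℝ) - (r0 : ℝ)) * a) ^ 2) ↔
      ∃ σ : Equiv.Perm (Fin (r + 1)), ∀ i : Fin (r + 1),
        x (σ i) = if (i : ℕ) < r0 then b
          else if (i : ℕ) = r0 then M - (r0 : ℝ) * b - ((r : ℝ) - (r0 : ℝ)) * a
          else a) := by
  exact stmt15_general r a b M ((even_two.strictConvexOn_pow two_ne_zero).subset
    (Set.subset_univ _) (convex_Icc a b)) r0 hr0r hr0 hr0max x hsum hx
end

section
/- Let t ≥ 1 and let F ⊆ C([n],k) be a nonempty family with I(F) ≥ (t−1)·|F|². Then, writing b(x) = x(x−1)⋯(x−t+1)/t! for the real polynomial extension of the binomial coefficient, one has b(I(F)/|F|²)·|F|² ≤ Σ_{F1∈F} Σ_{F2∈F} C(|F1 ∩ F2|, t) = Σ_{A ∈ C([n],t)} deg_F(A)². -/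
/-!
For `t ≥ 1`, the convex function equal to `b` on `[t - 1, ∞)` and to `0` below agrees with
`x ↦ C(x, t)` on `ℕ`, so Jensen's inequality bounds the average of `C(|A ∩ B|, t)` over all pairs
`(A, B)` from below. Counting in two ways the triples `(A, B, S)` with `S ⊆ A ∩ B` and `|S| = t`
gives the identity.
-/

open Finset

theorem descPochhammer_eval_average_mul_card_le_sum_choose {ι : Type*} {s : Finset ι}
    (hs : s.Nonempty) (f : ι → ℕ) (t : ℕ)
    (hf : ((t : ℝ) - 1) * #s ≤ ∑ i ∈ s, (f i : ℝ)) :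
    (descPochhammer ℝ t).eval ((∑ i ∈ s, (f i : ℝ)) / #s) / t.factorial * #s ≤
      ∑ i ∈ s, ((f i).choose t : ℝ) := by
  obtain rfl | ht := eq_or_ne t 0
  · simp
  have hcard : (0 : ℝ) < #s := mod_cast hs.card_pos
  have average_eq (g : ι → ℝ) : ∑ i ∈ s, (#s : ℝ)⁻¹ * g i = (∑ i ∈ s, g i) / #s := by
    rw [← mul_sum, inv_mul_eq_div]
  have weights_sum : ∑ _i ∈ s, (#s : ℝ)⁻¹ = 1 := by
    rw [sum_const, nsmul_eq_mul, mul_inv_cancel₀ hcard.ne']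
  have average_ge : (t : ℝ) - 1 ≤ ∑ i ∈ s, (#s : ℝ)⁻¹ * f i := by
    rwa [average_eq, le_div_iff₀ hcard]
  have jensen := descPochhammer_eval_div_factorial_le_sum_choose ht f (fun _ ↦ (#s : ℝ)⁻¹)
    (fun _ _ ↦ inv_nonneg.2 hcard.le) weights_sum average_ge
  rwa [average_eq, average_eq, le_div_iff₀ hcard] at jensen

section Families

variable {α : Type*} [DecidableEq α]

theorem powersetCard_inter_eq_filter {V A : Finset α} (hA : A ⊆ V) (B : Finset α) (t : ℕ) :
    (A ∩ B).powersetCard t = {S ∈ V.powersetCard t | S ⊆ A ∧ S ⊆ B} := by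
  ext S
  have hSV : S ⊆ A → S ⊆ V := fun hSA ↦ hSA.trans hA
  simp only [mem_powersetCard, mem_filter, subset_inter_iff]
  tauto

theorem sum_choose_card_inter_eq_sum_card_filter_mul {V : Finset α} {F : Finset (Finset α)}
    (hF : F ⊆ V.powerset) (G : Finset (Finset α)) (t : ℕ) :
    ∑ A ∈ F, ∑ B ∈ G, (#(A ∩ B)).choose t =
      ∑ S ∈ V.powersetCard t, #{A ∈ F | S ⊆ A} * #{B ∈ G | S ⊆ B} := by
  calc ∑ A ∈ F, ∑ B ∈ G, (#(A ∩ B)).choose t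
    _ = ∑ A ∈ F, ∑ B ∈ G, #{S ∈ V.powersetCard t | S ⊆ A ∧ S ⊆ B} := by
      refine sum_congr rfl fun A hA ↦ sum_congr rfl fun B _ ↦ ?_
      rw [← powersetCard_inter_eq_filter (mem_powerset.1 (hF hA)), card_powersetCard]
    _ = ∑ p ∈ F ×ˢ G, #{S ∈ V.powersetCard t | S ⊆ p.1 ∧ S ⊆ p.2} := by
      rw [sum_product]
    _ = ∑ S ∈ V.powersetCard t, #{p ∈ F ×ˢ G | S ⊆ p.1 ∧ S ⊆ p.2} :=
      sum_card_bipartiteAbove_eq_sum_card_bipartiteBelow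
        fun (p : Finset α × Finset α) S ↦ S ⊆ p.1 ∧ S ⊆ p.2
    _ = ∑ S ∈ V.powersetCard t, #{A ∈ F | S ⊆ A} * #{B ∈ G | S ⊆ B} := by
      refine sum_congr rfl fun S _ ↦ ?_
      rw [filter_product (S ⊆ ·) (S ⊆ ·), card_product]

theorem stmt18_general {V : Finset α} {F G : Finset (Finset α)} (t : ℕ)
    (hF : F ⊆ V.powerset) (hFne : F.Nonempty) (hGne : G.Nonempty)
    (hI : ((t : ℝ) - 1) * (#F * #G) ≤ ∑ A ∈ F, ∑ B ∈ G, (#(A ∩ B) : ℝ)) :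
    (descPochhammer ℝ t).eval ((∑ A ∈ F, ∑ B ∈ G, (#(A ∩ B) : ℝ)) / (#F * #G)) /
        t.factorial * (#F * #G) ≤
      ∑ A ∈ F, ∑ B ∈ G, ((#(A ∩ B)).choose t : ℝ) ∧
    ∑ A ∈ F, ∑ B ∈ G, ((#(A ∩ B)).choose t : ℝ) =
      ∑ S ∈ V.powersetCard t, (#{A ∈ F | S ⊆ A} : ℝ) * #{B ∈ G | S ⊆ B} := by
  constructor
  · simp only [← Nat.cast_mul, ← card_product, ← sum_product'] at hI ⊢
    exact descPochhammer_eval_average_mul_card_le_sum_choose (hFne.product hGne)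
      (fun p ↦ #(p.1 ∩ p.2)) t hI
  · exact_mod_cast sum_choose_card_inter_eq_sum_card_filter_mul hF G t

end Families

/-- **Jensen-type bound.** For a nonempty family `F` with `I(F) ≥ (t−1)|F|²`, writing
`b(x) = x(x−1)⋯(x−t+1)/t!` for the real extension of the binomial coefficient, one has
`b(I(F)/|F|²)·|F|² ≤ ∑_{F1,F2∈F} C(|F1∩F2|,t) = ∑_{A∈C([n],t)} deg_F(A)²`. -/
theorem stmt18 (n k t : ℕ) (ht : 1 ≤ t)
    (F : Finset (Finset ℕ)) (hF : F ⊆ (Icc 1 n).powersetCard k) (hne : F.Nonempty)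
    (hI : ((t : ℝ) - 1) * (F.card : ℝ) ^ 2 ≤ (totalInt F : ℝ)) :
    ((descPochhammer ℝ t).eval ((totalInt F : ℝ) / (F.card : ℝ) ^ 2) / (t.factorial : ℝ)) *
        (F.card : ℝ) ^ 2 ≤
      ∑ F1 ∈ F, ∑ F2 ∈ F, (((F1 ∩ F2).card).choose t : ℝ) ∧
    ∑ F1 ∈ F, ∑ F2 ∈ F, (((F1 ∩ F2).card).choose t : ℝ) =
      ∑ A ∈ (Icc 1 n).powersetCard t, (degF F A : ℝ) ^ 2 := by
  simp only [totalInt, degF, Nat.cast_sum, sq] at hI ⊢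
  exact stmt18_general t (hF.trans fun _ hA ↦ mem_powerset.2 (mem_powersetCard.1 hA).1) hne hne hI
end
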